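/- Let (ε_n)_{n≥1} be positive reals with Σ_n ε_n < ∞, let (y_n)_{n≥1} be a normalized block sequence of (e_i), and let (k_n)_{n≥0} be a strictly increasing sequence in ℕ such that for every n ≥ 1: (1) sup{ Σ_{i=1}^k ‖E_i(y_n)‖ : 1 ≤ k ≤ k_{n−1}, E₁ < ⋯ < E_k finite subsets of ℕ } ≤ 1 + ε_n, and (2) max supp(y_n) ≤ ε_n · f(k_n/3). Then (y_n) is equivalent to (e_n): there is C ≥ 1 such that (1/C)‖Σ α_i e_i‖ ≤ ‖Σ α_i y_i‖ ≤ C‖Σ α_i e_i‖ for all finitely supported real scalars (α_i). -/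

import Mathlib

abbrev c00 : Type := ℕ →₀ ℝ

noncomputable def flog (x : ℝ) : ℝ := Real.logb 2 (x + 1)

noncomputable def supNorm (x : c00) : ℝ := ⨆ i, |x i|

def proj (E : Finset ℕ) (x : c00) : c00 := x.filter (· ∈ E)

def FLt (A B : Finset ℕ) : Prop := ∀ a ∈ A, ∀ b ∈ B, a < b

def IsNormC00 (N : c00 → ℝ) : Prop :=
  (∀ x, N x = 0 ↔ x = 0) ∧ (∀ x y, N (x + y) ≤ N x + N y) ∧
    ∀ (a : ℝ) (x : c00), N (a • x) = |a| * N x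

def schSet (N : c00 → ℝ) (x : c00) : Set ℝ :=
  {s | ∃ n : ℕ, 2 ≤ n ∧ ∃ E : Fin n → Finset ℕ,
    (∀ i j : Fin n, i < j → FLt (E i) (E j)) ∧
    s = (flog n)⁻¹ * ∑ i, N (proj (E i) x)}

def IsSchlumprechtNorm (N : c00 → ℝ) : Prop :=
  IsNormC00 N ∧ ∀ x : c00, IsLUB (insert (supNorm x) (schSet N x)) (N x)

def IsBlockSeq (x : ℕ → c00) : Prop :=
  (∀ n, x n ≠ 0) ∧ ∀ n, ∀ i ∈ (x n).support, ∀ j ∈ (x (n+1)).support, i < j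

def SeqEquiv (N : c00 → ℝ) (u v : ℕ → c00) : Prop :=
  ∃ c : ℝ, 1 ≤ c ∧ ∀ a : ℕ →₀ ℝ,
    (1 / c) * N (a.sum fun i t => t • u i) ≤ N (a.sum fun i t => t • v i) ∧
    N (a.sum fun i t => t • v i) ≤ c * N (a.sum fun i t => t • u i)

/-!
Let `x = ∑ α i • e i`. The lower estimate holds for any normalized block sequence, by induction on
the size of the support of `x`.

For the upper estimate, cut `∑ α i • y i` into `n` successive pieces as in the implicit equation.
There is a critical index `c` such that `y i` is negligible against `flog n` for `i < c`, by (2),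
and sees the pieces almost as a single vector for `i > c`, by (1). So the `y i` with `i > c` can be
replaced by the coordinates of `x`, up to the summable errors, but `y c` may contribute its full
norm in addition to the average over the `n` pieces. The errors thus sum up to a multiple of
`‖x‖_∞`, and the rest is a functional of the norming set of `x` in which averages to the right of
some coordinates `i` are charged to `i`, with `(flog n)⁻¹` at most a summable `δ i`.

The doubling inequality shows that replacing each evaluation `‖A x‖` in such an average by
`‖A x‖ + ‖A' x‖`, with `A < A'`, costs only a factor `1 + 64 * δ i`: the sum of `n` trees with
doubled leaves is at most `(flog n + 64) * ‖x‖` rather than `2 * flog n * ‖x‖`. Charges can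
therefore be moved from the root of a tree to its leaves, at the cost of the bounded product of
these factors.
-/

section Families

/-- A family of finite sets is successive if it is increasing for the order `A < B` of the paper,
that is `max A < min B` for nonempty `A` and `B`. -/
def IsSuccessive {ι : Type*} [LT ι] (E : ι → Finset ℕ) : Prop :=
  ∀ i j, i < j → FLt (E i) (E j)

theorem FLt.mono {A B A' B' : Finset ℕ} (h : FLt A B) (hA : A' ⊆ A) (hB : B' ⊆ B) : FLt A' B' :=
  fun a ha b hb => h a (hA ha) b (hB hb)

namespace IsSuccessive

theorem mono {ι : Type*} [LT ι] {E F : ι → Finset ℕ} (hF : IsSuccessive F)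
    (h : ∀ i, E i ⊆ F i) : IsSuccessive E :=
  fun i j hij => (hF i j hij).mono (h i) (h j)

theorem eq_of_mem {ι : Type*} [LinearOrder ι] {E : ι → Finset ℕ} (hE : IsSuccessive E)
    {i j : ι} {p : ℕ} (hi : p ∈ E i) (hj : p ∈ E j) : i = j := by
  rcases lt_trichotomy i j with h | h | h
  · exact absurd (hE i j h p hi p hj) (lt_irrefl p)
  · exact h
  · exact absurd (hE j i h p hj p hi) (lt_irrefl p)

theorem cons {n : ℕ} {A : Finset ℕ} {E : Fin n → Finset ℕ} (hE : IsSuccessive E)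
    (hA : ∀ i, FLt A (E i)) : IsSuccessive (Fin.cons A E : Fin (n + 1) → Finset ℕ) := by
  intro i j hij
  cases j using Fin.cases with
  | zero => exact absurd hij (Fin.not_lt_zero i)
  | succ j =>
    cases i using Fin.cases with
    | zero => simpa using hA j
    | succ i => simpa using hE i j (Fin.succ_lt_succ_iff.1 hij)

theorem snoc {n : ℕ} {E : Fin n → Finset ℕ} {B : Finset ℕ} (hE : IsSuccessive E)
    (hB : ∀ i, FLt (E i) B) : IsSuccessive (Fin.snoc E B : Fin (n + 1) → Finset ℕ) := by
  intro i j hij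
  cases i using Fin.lastCases with
  | last => exact absurd hij (Fin.le_last j).not_gt
  | cast i =>
    cases j using Fin.lastCases with
    | last => simpa using hB i
    | cast j => simpa using hE i j hij

end IsSuccessive

theorem proj_apply (E : Finset ℕ) (x : c00) (i : ℕ) : proj E x i = if i ∈ E then x i else 0 :=
  Finsupp.filter_apply _ _ _

theorem proj_proj (A B : Finset ℕ) (x : c00) : proj A (proj B x) = proj (A ∩ B) x := by
  ext i
  simp only [proj_apply, Finset.mem_inter, ite_and]

theorem proj_proj_of_subset {A B : Finset ℕ} (h : A ⊆ B) (x : c00) :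
    proj A (proj B x) = proj A x := by
  rw [proj_proj, Finset.inter_eq_left.2 h]

theorem proj_smul (E : Finset ℕ) (a : ℝ) (x : c00) : proj E (a • x) = a • proj E x :=
  Finsupp.filter_smul

theorem proj_sum {ι : Type*} (s : Finset ι) (E : Finset ℕ) (x : ι → c00) :
    proj E (∑ i ∈ s, x i) = ∑ i ∈ s, proj E (x i) :=
  Finsupp.filter_sum _ _

theorem support_proj (E : Finset ℕ) (x : c00) : (proj E x).support = x.support.filter (· ∈ E) :=
  Finsupp.support_filter _ _

theorem proj_eq_self {E : Finset ℕ} {x : c00} (h : x.support ⊆ E) : proj E x = x :=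
  Finsupp.filter_eq_self_iff _ _ |>.2 fun _ hi => h (Finsupp.mem_support_iff.2 hi)

theorem proj_eq_zero {E : Finset ℕ} {x : c00} (h : ∀ i ∈ x.support, i ∉ E) : proj E x = 0 :=
  Finsupp.filter_eq_zero_iff _ _ |>.2 fun i hi => by
    by_contra hne
    exact h i (Finsupp.mem_support_iff.2 hne) hi

theorem proj_empty (x : c00) : proj ∅ x = 0 :=
  proj_eq_zero fun _ _ => Finset.notMem_empty _

theorem proj_singleton (i : ℕ) (x : c00) : proj {i} x = Finsupp.single i (x i) := by
  ext j
  by_cases h : i = j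
  · subst h; simp [proj_apply]
  · simp [proj_apply, Ne.symm h]

theorem exists_Ico_hull (E : Finset ℕ) : ∃ a b : ℕ, E ⊆ Finset.Ico a b ∧
    ∀ p ∈ Finset.Ico a b, (∃ q ∈ E, q ≤ p) ∧ ∃ q ∈ E, p ≤ q := by
  rcases E.eq_empty_or_nonempty with rfl | hne
  · exact ⟨0, 0, by simp, by simp⟩
  · refine ⟨E.min' hne, E.max' hne + 1, fun p hp => Finset.mem_Ico.2
      ⟨E.min'_le p hp, Nat.lt_succ_of_le (E.le_max' p hp)⟩, fun p hp => ?_⟩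
    rw [Finset.mem_Ico] at hp
    exact ⟨⟨_, E.min'_mem hne, hp.1⟩, ⟨_, E.max'_mem hne, Nat.le_of_lt_succ hp.2⟩⟩

end Families

section Logarithm

theorem flog_zero : flog 0 = 0 := by norm_num [flog]

theorem flog_one : flog 1 = 1 := by norm_num [flog]

theorem flog_mono {a b : ℝ} (ha : 0 ≤ a) (h : a ≤ b) : flog a ≤ flog b :=
  Real.logb_le_logb_of_le one_lt_two (by linarith) (by linarith)

theorem flog_nonneg {a : ℝ} (ha : 0 ≤ a) : 0 ≤ flog a :=
  Real.logb_nonneg one_lt_two (by linarith)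

theorem le_flog_of_two_pow_le {n r : ℕ} (h : 2 ^ r ≤ n) : (r : ℝ) ≤ flog n := by
  rw [flog, Real.le_logb_iff_rpow_le one_lt_two (by positivity), Real.rpow_natCast]
  have : (2 : ℝ) ^ r ≤ n := by exact_mod_cast h
  linarith

theorem three_halves_le_flog {n : ℕ} (hn : 2 ≤ n) : (3 / 2 : ℝ) ≤ flog n := by
  have hpow : (2 : ℝ) ^ (3 / 2 : ℝ) ≤ 3 := by
    refine le_of_sq_le_sq ?_ (by norm_num)
    rw [← Real.rpow_natCast, ← Real.rpow_mul zero_le_two]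
    norm_num
  have hn' : (2 : ℝ) ≤ n := by exact_mod_cast hn
  rw [flog, Real.le_logb_iff_rpow_le one_lt_two (by positivity)]
  linarith

theorem flog_le_flog_add {n n' R : ℕ} (h : n' ≤ n * 2 ^ R) : flog n' ≤ flog n + R := by
  have hR : (R : ℝ) = Real.logb 2 ((2 : ℝ) ^ R) := by simp [Real.logb_pow]
  rw [flog, flog, hR, ← Real.logb_mul (by positivity) (by positivity)]
  refine Real.logb_le_logb_of_le one_lt_two (by positivity) ?_
  have h' : (n' : ℝ) ≤ n * 2 ^ R := by exact_mod_cast h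
  linarith [one_le_pow₀ (one_le_two : (1 : ℝ) ≤ 2) (n := R)]

end Logarithm

namespace IsNormC00

variable {N : c00 → ℝ} (hN : IsNormC00 N)
include hN

theorem map_zero : N 0 = 0 := (hN.1 0).2 rfl

theorem add_le (x z : c00) : N (x + z) ≤ N x + N z := hN.2.1 x z

theorem map_smul (a : ℝ) (x : c00) : N (a • x) = |a| * N x := hN.2.2 a x

theorem nonneg (x : c00) : 0 ≤ N x :=
  apply_nonneg (Seminorm.of N hN.add_le fun a x => by rw [hN.map_smul, Real.norm_eq_abs]) x

theorem sum_le {ι : Type*} (s : Finset ι) (x : ι → c00) :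
    N (∑ i ∈ s, x i) ≤ ∑ i ∈ s, N (x i) :=
  Finset.le_sum_of_subadditive N hN.map_zero.le hN.add_le s x

theorem card_support_proj_lt {n : ℕ} {E : Fin n → Finset ℕ} (hE : IsSuccessive E) {x : c00}
    (h : N x < ∑ i, N (proj (E i) x)) (j : Fin n) :
    (proj (E j) x).support.card < x.support.card := by
  rw [support_proj]
  refine Finset.card_lt_card (Finset.filter_ssubset.2 ?_)
  by_contra! hsub
  refine h.ne ?_
  rw [Finset.sum_eq_single j, proj_eq_self hsub]
  · intro i _ hij
    rw [proj_eq_zero fun p hp hpi => hij (hE.eq_of_mem hpi (hsub p hp)), hN.map_zero]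
  · simp

end IsNormC00

namespace IsSchlumprechtNorm

variable {N : c00 → ℝ} (hN : IsSchlumprechtNorm N)
include hN

theorem isNorm : IsNormC00 N := hN.1

theorem abs_apply_le (x : c00) (i : ℕ) : |x i| ≤ N x := by
  have hbdd : BddAbove (Set.range fun j => |x j|) :=
    ((x.finite_range.image abs).subset (by rintro _ ⟨j, rfl⟩; exact ⟨x j, ⟨j, rfl⟩, rfl⟩)).bddAbove
  exact (le_ciSup hbdd i).trans ((hN.2 x).1 (Set.mem_insert _ _))

theorem sum_proj_le {n : ℕ} (hn : 2 ≤ n) {E : Fin n → Finset ℕ} (hE : IsSuccessive E) (x : c00) :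
    ∑ i, N (proj (E i) x) ≤ flog n * N x := by
  have hpos : 0 < flog n := by linarith [three_halves_le_flog hn]
  rw [← inv_mul_le_iff₀ hpos]
  exact (hN.2 x).1 (Set.mem_insert_of_mem _ ⟨n, hn, E, hE, rfl⟩)

theorem exists_split_of_lt {x : c00} {t : ℝ} (ht0 : 0 ≤ t) (ht : t < N x) :
    (∃ i, t < |x i|) ∨ ∃ n : ℕ, 2 ≤ n ∧ ∃ E : Fin n → Finset ℕ, IsSuccessive E ∧
      t * flog n < ∑ i, N (proj (E i) x) ∧ N x < ∑ i, N (proj (E i) x) := by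
  have hlt : max t (2 / 3 * N x) < N x := max_lt ht (by linarith)
  obtain ⟨s, rfl | ⟨n, hn, E, hE, rfl⟩, hs⟩ := (lt_isLUB_iff (hN.2 x)).1 hlt
  · exact Or.inl (exists_lt_of_lt_ciSup ((le_max_left _ _).trans_lt hs))
  · have hf := three_halves_le_flog hn
    rw [lt_inv_mul_iff₀ (by linarith), mul_comm, max_mul_of_nonneg _ _ (by linarith)] at hs
    refine Or.inr ⟨n, hn, E, hE, (le_max_left _ _).trans_lt hs, ?_⟩
    have := (le_max_right _ _).trans_lt hs
    nlinarith

theorem le_of_forall_split {x : c00} {B : ℝ} (hB : 0 ≤ B) (hcoord : ∀ i, |x i| ≤ B)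
    (hsplit : ∀ n : ℕ, 2 ≤ n → ∀ E : Fin n → Finset ℕ, IsSuccessive E →
      (∀ j, (proj (E j) x).support.card < x.support.card) →
      ∑ i, N (proj (E i) x) ≤ flog n * B) : N x ≤ B := by
  by_contra! hlt
  rcases hN.exists_split_of_lt hB hlt with ⟨i, hi⟩ | ⟨n, hn, E, hE, hB', hx⟩
  · exact hi.not_ge (hcoord i)
  · linarith [hsplit n hn E hE (hN.isNorm.card_support_proj_lt hE hx)]

theorem proj_le (E : Finset ℕ) (x : c00) : N (proj E x) ≤ N x := by
  induction hm : (proj E x).support.card using Nat.strong_induction_on generalizing x with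
  | _ m ih =>
    subst hm
    refine hN.le_of_forall_split (hN.isNorm.nonneg x) (fun i => ?_) fun n hn F hF hcard => ?_
    · rw [proj_apply]
      split_ifs
      · exact hN.abs_apply_le x i
      · simpa using hN.isNorm.nonneg x
    · refine le_trans (Finset.sum_le_sum fun j _ => ?_) (hN.sum_proj_le hn hF x)
      have hcomm : proj (F j) (proj E x) = proj E (proj (F j) x) := by
        rw [proj_proj, proj_proj, Finset.inter_comm]
      have hj := hcard j
      rw [hcomm] at hj ⊢
      exact ih _ hj _ rfl

theorem proj_mono {A B : Finset ℕ} (h : A ⊆ B) (x : c00) : N (proj A x) ≤ N (proj B x) := by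
  rw [← proj_proj_of_subset h]
  exact hN.proj_le _ _

theorem map_single (i : ℕ) (a : ℝ) : N (Finsupp.single i a) = |a| := by
  refine le_antisymm (hN.le_of_forall_split (abs_nonneg a) (fun j => ?_) fun n _ E _ hcard => ?_)
    (by simpa using hN.abs_apply_le (Finsupp.single i a) i)
  · rw [Finsupp.single_apply]
    split_ifs <;> simp
  · have hzero : ∀ j, proj (E j) (Finsupp.single i a) = 0 := fun j => by
      have hle : (Finsupp.single i a : c00).support.card ≤ 1 :=
        (Finset.card_le_card Finsupp.support_single_subset).trans (by simp)
      have := hcard j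
      rw [← Finsupp.card_support_eq_zero]
      omega
    simpa [hzero, hN.isNorm.map_zero] using
      mul_nonneg (flog_nonneg (Nat.cast_nonneg n)) (abs_nonneg a)

theorem map_proj_singleton (i : ℕ) (x : c00) : N (proj {i} x) = |x i| := by
  rw [proj_singleton, hN.map_single]

theorem map_le_sum_abs (x : c00) : N x ≤ ∑ p ∈ x.support, |x p| := by
  conv_lhs => rw [← x.sum_single]
  exact (hN.isNorm.sum_le _ _).trans (Finset.sum_le_sum fun p _ => (hN.map_single p _).le)

theorem sum_proj_le_sum_abs {n : ℕ} {E : Fin n → Finset ℕ} (hE : IsSuccessive E) (x : c00) :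
    ∑ i, N (proj (E i) x) ≤ ∑ p ∈ x.support, |x p| := by
  have hdisj : Set.PairwiseDisjoint (Finset.univ : Finset (Fin n))
      fun i => x.support.filter (· ∈ E i) := fun i _ j _ hij =>
    Finset.disjoint_left.2 fun p hi hj =>
      hij (hE.eq_of_mem (Finset.mem_filter.1 hi).2 (Finset.mem_filter.1 hj).2)
  calc ∑ i, N (proj (E i) x)
      ≤ ∑ i, ∑ p ∈ x.support.filter (· ∈ E i), |x p| := Finset.sum_le_sum fun i _ => by
        refine (hN.map_le_sum_abs _).trans (le_of_eq ?_)
        rw [support_proj]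
        exact Finset.sum_congr rfl fun p hp => by
          rw [proj_apply, if_pos (Finset.mem_filter.1 hp).2]
    _ = ∑ p ∈ Finset.univ.biUnion fun i => x.support.filter (· ∈ E i), |x p| :=
        (Finset.sum_biUnion hdisj).symm
    _ ≤ ∑ p ∈ x.support, |x p| := Finset.sum_le_sum_of_subset_of_nonneg
        (Finset.biUnion_subset.2 fun i _ => Finset.filter_subset _ _) fun _ _ _ => abs_nonneg _

theorem sum_proj_le_of_subset {n : ℕ} (hn : 2 ≤ n) {E : Fin n → Finset ℕ} (hE : IsSuccessive E)
    {B : Finset ℕ} (hB : ∀ i, E i ⊆ B) (x : c00) :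
    ∑ i, N (proj (E i) x) ≤ flog n * N (proj B x) := by
  simpa only [proj_proj_of_subset (hB _)] using hN.sum_proj_le hn hE (proj B x)

theorem sum_map_proj_le {l : List (Finset ℕ)} (hl : l.Pairwise FLt) {B : Finset ℕ}
    (hB : ∀ A ∈ l, A ⊆ B) (x : c00) :
    (l.map fun A => N (proj A x)).sum ≤ flog l.length * N (proj B x) := by
  match l, hl, hB with
  | [], _, _ => simp [flog_zero]
  | [A], _, hB => simpa [flog_one] using hN.proj_mono (hB A (by simp)) x
  | A₁ :: A₂ :: l, hl, hB =>
    have h := hN.sum_proj_le_of_subset (n := (A₁ :: A₂ :: l).length) (by simp)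
      (E := (A₁ :: A₂ :: l).get) (fun i j hij => List.pairwise_iff_get.1 hl i j hij)
      (fun i => hB _ (List.get_mem _ _)) x
    rwa [← List.sum_ofFn, List.ofFn_comp' (A₁ :: A₂ :: l).get (fun A => N (proj A x)),
      List.ofFn_get] at h

theorem sum_proj_le_of_subset_Ico {z : c00} {n a b : ℕ} {e : ℝ}
    (h : ∀ E : Fin (n + 2) → Finset ℕ, IsSuccessive E → ∑ j, N (proj (E j) z) ≤ N z + e)
    {R : Fin n → Finset ℕ} (hR : IsSuccessive R) (hab : ∀ j, R j ⊆ Finset.Ico a b) :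
    ∑ j, N (proj (R j) z) ≤ N (proj (Finset.Ico a b) z) + e := by
  set A := z.support.filter (· < a)
  set B := z.support.filter (max a b ≤ ·)
  have hRB : ∀ j, FLt (R j) B := fun j p hp q hq =>
    (Finset.mem_Ico.1 (hab j hp)).2.trans_le
      ((le_max_right a b).trans (Finset.mem_filter.1 hq).2)
  have hAR : ∀ j, FLt A ((Fin.snoc R B : Fin (n + 1) → Finset ℕ) j) := by
    intro j p hp q hq
    refine (Finset.mem_filter.1 hp).2.trans_le ?_
    cases j using Fin.lastCases with
    | last =>
      rw [Fin.snoc_last] at hq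
      exact (le_max_left a b).trans (Finset.mem_filter.1 hq).2
    | cast j => exact (Finset.mem_Ico.1 (hab j (by simpa using hq))).1
  have hsum := h _ ((hR.snoc hRB).cons hAR)
  rw [Fin.sum_univ_succ, Fin.sum_univ_castSucc] at hsum
  simp only [Fin.cons_zero, Fin.cons_succ, Fin.snoc_castSucc, Fin.snoc_last] at hsum
  have hz : z = proj A z + proj (Finset.Ico a b) z + proj B z := by
    ext p
    simp only [Finsupp.add_apply, proj_apply, A, B, Finset.mem_filter, Finset.mem_Ico,
      Finsupp.mem_support_iff, max_le_iff]
    grind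
  have htri : N z ≤ N (proj A z) + N (proj (Finset.Ico a b) z) + N (proj B z) := by
    conv_lhs => rw [hz]
    exact (hN.isNorm.add_le _ _).trans (add_le_add_left (hN.isNorm.add_le _ _) _)
  linarith

theorem le_of_abs_le_proj {G : ℕ → Finset ℕ} (hG : IsSuccessive G) {x z : c00}
    (h : ∀ i, |x i| ≤ N (proj (G i) z)) : N x ≤ N z := by
  induction hm : x.support.card using Nat.strong_induction_on generalizing x z with
  | _ m ih =>
    subst hm
    refine hN.le_of_forall_split (hN.isNorm.nonneg z) (fun i => (h i).trans (hN.proj_le _ _))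
      fun n hn F hF hcard => ?_
    have hunion : IsSuccessive fun j => (F j).biUnion G := fun i j hij a ha b hb => by
      obtain ⟨p, hp, hap⟩ := Finset.mem_biUnion.1 ha
      obtain ⟨q, hq, hbq⟩ := Finset.mem_biUnion.1 hb
      exact hG p q (hF i j hij p hp q hq) a hap b hbq
    refine le_trans (Finset.sum_le_sum fun j _ => ih _ (hcard j) (fun i => ?_) rfl)
      (hN.sum_proj_le hn hunion z)
    rw [proj_apply]
    split_ifs with hi
    · rw [proj_proj_of_subset (Finset.subset_biUnion_of_mem G hi)]
      exact h i
    · simpa using hN.isNorm.nonneg _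

theorem exists_Ico_split_of_lt {x : c00} {t : ℝ} (ht0 : 0 ≤ t) (ht : t < N x) :
    (∃ i, t < |x i|) ∨ ∃ n : ℕ, 2 ≤ n ∧ ∃ a b : Fin n → ℕ,
      IsSuccessive (fun j => Finset.Ico (a j) (b j)) ∧
      (∀ j, (proj (Finset.Ico (a j) (b j)) x).support.card < x.support.card) ∧
      t * flog n < ∑ j, N (proj (Finset.Ico (a j) (b j)) x) := by
  refine (hN.exists_split_of_lt ht0 ht).imp_right fun ⟨n, hn, E, hE, ht', hx⟩ => ?_
  choose a b hsub hhull using fun j => exists_Ico_hull (E j)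
  have hle : ∑ i, N (proj (E i) x) ≤ ∑ i, N (proj (Finset.Ico (a i) (b i)) x) :=
    Finset.sum_le_sum fun j _ => hN.proj_mono (hsub j) x
  have hIco : IsSuccessive fun j => Finset.Ico (a j) (b j) := fun i j hij p hp q hq => by
    obtain ⟨p', hp', hpp⟩ := (hhull i p hp).2
    obtain ⟨q', hq', hqq⟩ := (hhull j q hq).1
    exact (hpp.trans_lt (hE i j hij p' hp' q' hq')).trans_le hqq
  exact ⟨n, hn, a, b, hIco, hN.isNorm.card_support_proj_lt hIco (hx.trans_le hle),
    ht'.trans_le hle⟩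

end IsSchlumprechtNorm

/-- The trees that compute lower bounds of twice the norm: an inner vertex with `n` branches stands
for the operation `(flog n)⁻¹ * ∑ j, ·` of the implicit equation, and each leaf carries two sets
`A < B` instead of one, to be evaluated as `‖A x‖ + ‖B x‖`. -/
inductive DoubledTree
  | leaf (A B : Finset ℕ)
  | node (n : ℕ) (child : Fin n → DoubledTree)

namespace DoubledTree

/-- The union of the sets at the leaves. -/
def support : DoubledTree → Finset ℕ
  | leaf A B => A ∪ B
  | node _ c => Finset.univ.biUnion fun j => (c j).support

/-- The number of vertices. -/
def size : DoubledTree → ℕ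
  | leaf _ _ => 1
  | node _ c => 1 + ∑ j, (c j).size

/-- The evaluation of the tree at the vector `x`. -/
noncomputable def value (N : c00 → ℝ) (x : c00) : DoubledTree → ℝ
  | leaf A B => N (proj A x) + N (proj B x)
  | node n c => (flog n)⁻¹ * ∑ j, (c j).value N x

/-- The trees allowed in the implicit equation: branchings are at least binary, and all the
families of sets involved are successive. -/
def IsAdmissible : DoubledTree → Prop
  | leaf A B => FLt A B
  | node n c => 2 ≤ n ∧ IsSuccessive (fun j => (c j).support) ∧ ∀ j, (c j).IsAdmissible

/-- Removal of the root of a tree when the root has at most `m` branches. -/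
def collapse (m : ℕ) : DoubledTree → List DoubledTree
  | leaf A B => [leaf A B]
  | node n c => if n ≤ m then List.ofFn c else [node n c]

/-- The increase of the total value under `collapse m`. -/
noncomputable def gain (N : c00 → ℝ) (x : c00) (m : ℕ) : DoubledTree → ℝ
  | leaf _ _ => 0
  | node n c => if n ≤ m then (flog n - 1) * (node n c).value N x else 0

/-- The two sets of a leaf, and the support of any other tree. -/
def pieces : DoubledTree → List (Finset ℕ)
  | leaf A B => [A, B]
  | node n c => [(node n c).support]

/-- A forest in `B`: a list of admissible trees with successive supports contained in `B`. -/
def IsForestIn (B : Finset ℕ) (l : List DoubledTree) : Prop :=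
  l.Pairwise (fun s t => FLt s.support t.support) ∧ ∀ t ∈ l, t.IsAdmissible ∧ t.support ⊆ B

theorem support_subset_node {n : ℕ} (c : Fin n → DoubledTree) (j : Fin n) :
    (c j).support ⊆ (node n c).support :=
  Finset.subset_biUnion_of_mem (fun j => (c j).support) (Finset.mem_univ j)

theorem isForestIn_ofFn {n : ℕ} {c : Fin n → DoubledTree} (h : (node n c).IsAdmissible) :
    IsForestIn (node n c).support (List.ofFn c) :=
  ⟨List.pairwise_ofFn.2 fun i j hij => h.2.1 i j hij,
    List.forall_mem_ofFn_iff.2 fun j => ⟨h.2.2 j, support_subset_node c j⟩⟩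

section Value

variable {N : c00 → ℝ} {x : c00}

theorem value_nonneg (hN : IsNormC00 N) (t : DoubledTree) : 0 ≤ t.value N x := by
  induction t with
  | leaf A B => exact add_nonneg (hN.nonneg _) (hN.nonneg _)
  | node n c ih =>
    exact mul_nonneg (inv_nonneg.2 (flog_nonneg n.cast_nonneg)) (Finset.sum_nonneg fun j _ => ih j)

theorem flog_mul_value_node {n : ℕ} (hn : 2 ≤ n) (c : Fin n → DoubledTree) :
    flog n * (node n c).value N x = ∑ j, (c j).value N x :=
  mul_inv_cancel_left₀ (by linarith [three_halves_le_flog hn]) _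

theorem value_le_two_mul (hN : IsSchlumprechtNorm N) {t : DoubledTree} (ht : t.IsAdmissible) :
    t.value N x ≤ 2 * N (proj t.support x) := by
  induction t with
  | leaf A B =>
    rw [value, two_mul]
    exact add_le_add (hN.proj_mono Finset.subset_union_left x)
      (hN.proj_mono Finset.subset_union_right x)
  | node n c ih =>
    obtain ⟨hn, hc, hadm⟩ := ht
    refine le_of_mul_le_mul_left ?_ (by linarith [three_halves_le_flog hn] : 0 < flog n)
    calc flog n * (node n c).value N x = ∑ j, (c j).value N x := flog_mul_value_node hn c
      _ ≤ ∑ j, 2 * N (proj (c j).support x) := Finset.sum_le_sum fun j _ => ih j (hadm j)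
      _ = 2 * ∑ j, N (proj (c j).support x) := (Finset.mul_sum _ _ _).symm
      _ ≤ 2 * (flog n * N (proj (node n c).support x)) := by
        gcongr
        exact hN.sum_proj_le_of_subset hn hc (support_subset_node c) x
      _ = flog n * (2 * N (proj (node n c).support x)) := by ring

theorem gain_nonneg (hN : IsNormC00 N) {t : DoubledTree} (ht : t.IsAdmissible) (m : ℕ) :
    0 ≤ t.gain N x m := by
  cases t with
  | leaf A B => exact le_rfl
  | node n c =>
    rw [gain]
    split_ifs
    · exact mul_nonneg (by linarith [three_halves_le_flog ht.1]) (value_nonneg hN _)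
    · exact le_rfl

theorem sum_value_collapse {t : DoubledTree} (ht : t.IsAdmissible) (m : ℕ) :
    ((t.collapse m).map (value N x)).sum = t.value N x + t.gain N x m := by
  cases t with
  | leaf A B => simp [collapse, gain]
  | node n c =>
    rw [collapse, gain]
    split_ifs
    · rw [List.map_ofFn, List.sum_ofFn]
      have := flog_mul_value_node (N := N) (x := x) ht.1 c
      simp only [Function.comp_apply]
      linarith
    · simp

end Value

section Refinement

theorem size_pos (t : DoubledTree) : 0 < t.size := by
  cases t <;> simp [size]

theorem sum_size_collapse_le (m : ℕ) (t : DoubledTree) :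
    ((t.collapse m).map size).sum ≤ t.size := by
  cases t with
  | leaf A B => simp [collapse]
  | node n c =>
    rw [collapse]
    split_ifs <;> simp [size, List.sum_ofFn]

theorem sum_size_collapse_lt {N : c00 → ℝ} {x : c00} {m : ℕ} {t : DoubledTree}
    (h : t.gain N x m ≠ 0) : ((t.collapse m).map size).sum < t.size := by
  cases t with
  | leaf A B => exact absurd rfl h
  | node n c =>
    have hnm : n ≤ m := by
      by_contra hnm
      exact h (if_neg hnm)
    simp [collapse, hnm, size, List.sum_ofFn]

theorem length_collapse_le {m : ℕ} (hm : 0 < m) (t : DoubledTree) :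
    (t.collapse m).length ≤ m := by
  cases t with
  | leaf A B => exact hm
  | node n c =>
    rw [collapse]
    split_ifs with h
    · simpa using h
    · exact hm

theorem isForestIn_collapse {t : DoubledTree} (ht : t.IsAdmissible) (m : ℕ) :
    IsForestIn t.support (t.collapse m) := by
  cases t with
  | leaf A B => exact ⟨by simp [collapse], by simpa [collapse] using ht⟩
  | node n c =>
    rw [collapse]
    split_ifs
    · exact isForestIn_ofFn ht
    · exact ⟨by simp, by simpa using ht⟩

theorem subset_support_of_mem_pieces {t : DoubledTree} {A : Finset ℕ} (hA : A ∈ t.pieces) :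
    A ⊆ t.support := by
  cases t with
  | leaf A' B' =>
    rcases List.mem_pair.1 hA with rfl | rfl
    · exact Finset.subset_union_left
    · exact Finset.subset_union_right
  | node n c => exact (List.mem_singleton.1 hA).subset

theorem pairwise_pieces {t : DoubledTree} (ht : t.IsAdmissible) : t.pieces.Pairwise FLt := by
  cases t with
  | leaf A B => exact List.pairwise_pair.2 ht
  | node n c => exact List.pairwise_singleton _ _

theorem length_pieces_le (t : DoubledTree) : t.pieces.length ≤ 2 := by
  cases t <;> simp [pieces]

theorem pairwise_flatMap_FLt {β : Type*} {l : List DoubledTree}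
    (hl : l.Pairwise fun s t => FLt s.support t.support) {g : DoubledTree → List β}
    {supp : β → Finset ℕ} (hg : ∀ t ∈ l, (g t).Pairwise fun a b => FLt (supp a) (supp b))
    (hsub : ∀ t ∈ l, ∀ a ∈ g t, supp a ⊆ t.support) :
    (l.flatMap g).Pairwise fun a b => FLt (supp a) (supp b) :=
  List.pairwise_flatMap.2 ⟨hg, hl.imp_of_mem fun hs ht hst a ha b hb =>
    hst.mono (hsub _ hs a ha) (hsub _ ht b hb)⟩

theorem IsForestIn.collapse {B : Finset ℕ} {l : List DoubledTree} (hl : IsForestIn B l) (m : ℕ) :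
    IsForestIn B (l.flatMap (collapse m)) := by
  refine ⟨pairwise_flatMap_FLt hl.1 (fun t ht => (isForestIn_collapse (hl.2 t ht).1 m).1)
    fun t ht s hs => ((isForestIn_collapse (hl.2 t ht).1 m).2 s hs).2, fun s hs => ?_⟩
  obtain ⟨t, ht, hst⟩ := List.mem_flatMap.1 hs
  obtain ⟨hadm, hsub⟩ := (isForestIn_collapse (hl.2 t ht).1 m).2 s hst
  exact ⟨hadm, hsub.trans (hl.2 t ht).2⟩

theorem sum_map_flatMap {α β M : Type*} [AddMonoid M] (l : List α) (g : α → List β) (F : β → M) :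
    ((l.flatMap g).map F).sum = (l.map fun a => ((g a).map F).sum).sum := by
  induction l with
  | nil => rfl
  | cons a l ih => simp [ih]

theorem length_flatMap_le {α β : Type*} {l : List α} {g : α → List β} {m : ℕ}
    (h : ∀ a ∈ l, (g a).length ≤ m) : (l.flatMap g).length ≤ l.length * m := by
  rw [List.length_flatMap]
  simpa using List.sum_le_card_nsmul (l.map fun a => (g a).length) m (by simpa using h)

theorem sum_pieces_le {N : c00 → ℝ} (hN : IsSchlumprechtNorm N) {B : Finset ℕ}
    {l : List DoubledTree} (hl : IsForestIn B l) (x : c00) :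
    (l.map fun t => (t.pieces.map fun A => N (proj A x)).sum).sum ≤
      (flog l.length + 1) * N (proj B x) := by
  have hsucc : (l.flatMap pieces).Pairwise FLt :=
    pairwise_flatMap_FLt (supp := id) hl.1 (fun t ht => pairwise_pieces (hl.2 t ht).1)
      fun t _ A hA => subset_support_of_mem_pieces hA
  have hsub : ∀ A ∈ l.flatMap pieces, A ⊆ B := fun A hA => by
    obtain ⟨t, ht, hAt⟩ := List.mem_flatMap.1 hA
    exact (subset_support_of_mem_pieces hAt).trans (hl.2 t ht).2
  have hlen : (l.flatMap pieces).length ≤ l.length * 2 ^ 1 :=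
    length_flatMap_le fun t _ => length_pieces_le t
  rw [← sum_map_flatMap]
  refine (hN.sum_map_proj_le hsucc hsub x).trans ?_
  gcongr
  · exact hN.isNorm.nonneg _
  · simpa using flog_le_flog_add hlen

end Refinement

section Doubling

variable {N : c00 → ℝ} {x : c00}

/-- The induction hypothesis of the doubling inequality: it holds for all forests with fewer than
`S` vertices. -/
def DoublingBelow (N : c00 → ℝ) (x : c00) (S : ℕ) : Prop :=
  ∀ (l : List DoubledTree) (B : Finset ℕ), IsForestIn B l → (l.map size).sum < S →
    (l.map (value N x)).sum ≤ (flog l.length + 64) * N (proj B x)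

-- Collapsing multiplies the number of trees by at most `2 ^ R`, hence costs only `R` in the bound.
theorem sum_gain_le (hN : IsSchlumprechtNorm N) {B : Finset ℕ} {l : List DoubledTree}
    (hl : IsForestIn B l) (ih : DoublingBelow N x (l.map size).sum)
    (hlt : (flog l.length + 64) * N (proj B x) < (l.map (value N x)).sum) (R : ℕ) :
    (l.map (gain N x (2 ^ R))).sum ≤ R * N (proj B x) := by
  have hB := hN.isNorm.nonneg (proj B x)
  by_cases hgain : ∃ t ∈ l, t.gain N x (2 ^ R) ≠ 0
  · have hsize : ((l.flatMap (collapse (2 ^ R))).map size).sum < (l.map size).sum := by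
      rw [sum_map_flatMap]
      obtain ⟨t, ht, htg⟩ := hgain
      exact List.sum_lt_sum _ _ (fun s _ => sum_size_collapse_le _ s)
        ⟨t, ht, sum_size_collapse_lt htg⟩
    have hvalue : ((l.flatMap (collapse (2 ^ R))).map (value N x)).sum =
        (l.map (value N x)).sum + (l.map (gain N x (2 ^ R))).sum := by
      rw [sum_map_flatMap, ← List.sum_map_add]
      exact congrArg List.sum (List.map_congr_left fun t ht => sum_value_collapse (hl.2 t ht).1 _)
    have hlen := flog_le_flog_add
      (length_flatMap_le fun t (_ : t ∈ l) => length_collapse_le (Nat.two_pow_pos R) t)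
    have hbound := ih _ B (hl.collapse _) hsize
    nlinarith
  · push Not at hgain
    rw [List.map_congr_left hgain]
    simpa using mul_nonneg R.cast_nonneg hB

/-- The weight with which the branchings of size about `2 ^ (64 * 2 ^ s)` enter the doubling
inequality. -/
noncomputable def layerWeight (s : ℕ) : ℝ := 5 / (64 * 4 ^ s)

theorem layerWeight_pos (s : ℕ) : 0 < layerWeight s := by
  unfold layerWeight
  positivity

theorem sum_layerWeight_mul_le (M : ℕ) :
    ∑ s ∈ Finset.range M, layerWeight s * (64 * 2 ^ s) ≤ 10 := by
  have hterm : ∀ s, layerWeight s * (64 * 2 ^ s) = 5 * (1 / 2) ^ s := fun s => by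
    rw [layerWeight, show (4 : ℝ) = 2 * 2 by norm_num, mul_pow, one_div_pow]
    field_simp
  simp only [hterm, ← Finset.mul_sum]
  linarith [sum_geometric_two_le M]

theorem exists_layer {n : ℕ} (hn : 2 ^ 32 < n) :
    ∃ s < n, n ≤ 2 ^ (64 * 2 ^ s) ∧ (32 : ℝ) * 2 ^ s ≤ flog n := by
  have hn0 : n ≠ 0 := by omega
  set r := Nat.log 2 n
  have hr : 32 ≤ r := Nat.le_log_of_pow_le one_lt_two hn.le
  have hrn : 2 ^ r ≤ n := Nat.pow_log_le_self 2 hn0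
  set s := Nat.log 2 (r / 32)
  have hs : 2 ^ s ≤ r / 32 := Nat.pow_log_le_self 2 (by omega)
  have hs' : r / 32 < 2 ^ (s + 1) := Nat.lt_pow_succ_log_self one_lt_two _
  refine ⟨s, ?_, ?_, ?_⟩
  · have := Nat.lt_two_pow_self (n := s)
    have := Nat.lt_two_pow_self (n := r)
    omega
  · refine (Nat.lt_pow_succ_log_self one_lt_two n).le.trans (Nat.pow_le_pow_right two_pos ?_)
    rw [pow_succ] at hs'
    change r + 1 ≤ _
    omega
  · refine le_trans ?_ (le_flog_of_two_pow_le hrn)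
    exact_mod_cast (by omega : 32 * 2 ^ s ≤ r)

theorem sixtyfour_le_layerWeight_mul {f : ℝ} {s : ℕ} (h : (32 : ℝ) * 2 ^ s ≤ f) :
    64 ≤ layerWeight s * (f - 1) * f := by
  have hone : (1 : ℝ) ≤ 2 ^ s := one_le_pow₀ one_le_two
  have hmul : 31 * 2 ^ s * (32 * 2 ^ s) ≤ (f - 1) * f :=
    mul_le_mul (by linarith) h (by positivity) (by linarith)
  rw [layerWeight, show (4 : ℝ) = 2 * 2 by norm_num, mul_pow, mul_assoc, div_mul_eq_mul_div,
    le_div_iff₀ (by positivity)]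
  nlinarith

theorem lt_size_node {n : ℕ} (c : Fin n → DoubledTree) : n < (node n c).size := by
  have : ∑ _j : Fin n, 1 ≤ ∑ j, (c j).size := Finset.sum_le_sum fun j _ => (c j).size_pos
  simp only [Finset.sum_const, Finset.card_univ, Fintype.card_fin, smul_eq_mul, mul_one] at this
  rw [size]
  omega

theorem DoublingBelow.flog_mul_value_node_le {n : ℕ} {c : Fin n → DoubledTree}
    (h : (node n c).IsAdmissible) (ih : DoublingBelow N x (node n c).size) :
    flog n * (node n c).value N x ≤ (flog n + 64) * N (proj (node n c).support x) := by
  have hsize : ((List.ofFn c).map size).sum < (node n c).size := by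
    simp [size, List.sum_ofFn]
  have hbound := ih _ _ (isForestIn_ofFn h) hsize
  rwa [List.map_ofFn, List.sum_ofFn, List.length_ofFn, Function.comp_def,
    ← flog_mul_value_node h.1 c] at hbound

theorem value_node_le_of_large (hN : IsNormC00 N) {n M : ℕ} {c : Fin n → DoubledTree}
    (h : (node n c).IsAdmissible) (hM : (node n c).size ≤ M) (hn : 2 ^ 32 < n)
    (ih : DoublingBelow N x (node n c).size) :
    (node n c).value N x ≤ N (proj (node n c).support x) +
      ∑ s ∈ Finset.range M, layerWeight s * (node n c).gain N x (2 ^ (64 * 2 ^ s)) := by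
  obtain ⟨s, hsn, hns, hs⟩ := exists_layer hn
  have hterm : layerWeight s * (node n c).gain N x (2 ^ (64 * 2 ^ s)) ≤
      ∑ s ∈ Finset.range M, layerWeight s * (node n c).gain N x (2 ^ (64 * 2 ^ s)) :=
    Finset.single_le_sum (f := fun s => layerWeight s * (node n c).gain N x (2 ^ (64 * 2 ^ s)))
      (fun s _ => mul_nonneg (layerWeight_pos s).le (gain_nonneg hN h _))
      (Finset.mem_range.2 (hsn.trans ((lt_size_node c).trans_le hM)))
  refine le_trans ?_ (add_le_add_right hterm _)
  rw [gain, if_pos hns, ← sub_le_iff_le_add']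
  have hf := three_halves_le_flog h.1
  have hv := value_nonneg (x := x) hN (node n c)
  have hdbl := ih.flog_mul_value_node_le h
  have hw := mul_le_mul_of_nonneg_right (sixtyfour_le_layerWeight_mul hs) hv
  rcases le_total ((node n c).value N x) (N (proj (node n c).support x)) with hle | hle
  · exact (sub_nonpos.2 hle).trans
      (mul_nonneg (layerWeight_pos s).le (mul_nonneg (by linarith) hv))
  · refine le_of_mul_le_mul_left ?_ (by linarith : 0 < flog n)
    linarith

theorem value_le_pieces_add_gain (hN : IsSchlumprechtNorm N) {t : DoubledTree}
    (ht : t.IsAdmissible) {M : ℕ} (htM : t.size ≤ M) (ih : DoublingBelow N x t.size) :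
    t.value N x ≤ (t.pieces.map fun A => N (proj A x)).sum + (t.gain N x (2 ^ 32) +
      ∑ s ∈ Finset.range M, layerWeight s * t.gain N x (2 ^ (64 * 2 ^ s))) := by
  cases t with
  | leaf A B => simp [value, pieces, gain]
  | node n c =>
    have hpieces : ((node n c).pieces.map fun A => N (proj A x)).sum =
        N (proj (node n c).support x) := by simp [pieces]
    rw [hpieces]
    by_cases hn : n ≤ 2 ^ 32
    · have hsum : 0 ≤ ∑ s ∈ Finset.range M,
          layerWeight s * (node n c).gain N x (2 ^ (64 * 2 ^ s)) :=
        Finset.sum_nonneg fun s _ =>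
          mul_nonneg (layerWeight_pos s).le (gain_nonneg hN.isNorm ht _)
      have hgain : (node n c).gain N x (2 ^ 32) = (flog n - 1) * (node n c).value N x := if_pos hn
      nlinarith [three_halves_le_flog ht.1, value_nonneg (x := x) hN.isNorm (node n c),
        value_le_two_mul (x := x) hN ht]
    · have hgain := gain_nonneg (x := x) hN.isNorm ht (2 ^ 32)
      linarith [value_node_le_of_large hN.isNorm ht htM (not_le.1 hn) ih]

theorem sum_layerWeight_mul_sum_gain_le {B : Finset ℕ} {l : List DoubledTree}
    (hB : 0 ≤ N (proj B x))
    (hgain : ∀ R : ℕ, (l.map (gain N x (2 ^ R))).sum ≤ R * N (proj B x)) (M : ℕ) :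
    ∑ s ∈ Finset.range M, layerWeight s * (l.map (gain N x (2 ^ (64 * 2 ^ s)))).sum ≤
      10 * N (proj B x) :=
  calc ∑ s ∈ Finset.range M, layerWeight s * (l.map (gain N x (2 ^ (64 * 2 ^ s)))).sum
      ≤ ∑ s ∈ Finset.range M, layerWeight s * (64 * 2 ^ s) * N (proj B x) := by
        refine Finset.sum_le_sum fun s _ => ?_
        rw [mul_assoc]
        refine mul_le_mul_of_nonneg_left ?_ (layerWeight_pos s).le
        exact_mod_cast hgain (64 * 2 ^ s)
    _ = (∑ s ∈ Finset.range M, layerWeight s * (64 * 2 ^ s)) * N (proj B x) :=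
        (Finset.sum_mul _ _ _).symm
    _ ≤ 10 * N (proj B x) := mul_le_mul_of_nonneg_right (sum_layerWeight_mul_le M) hB

theorem sum_value_le (hN : IsSchlumprechtNorm N) {B : Finset ℕ} {l : List DoubledTree}
    (hl : IsForestIn B l) : (l.map (value N x)).sum ≤ (flog l.length + 64) * N (proj B x) := by
  induction hS : (l.map size).sum using Nat.strong_induction_on generalizing l B with
  | _ S ih =>
    subst hS
    have hbelow : ∀ S ≤ (l.map size).sum, DoublingBelow N x S :=
      fun S hS l' B' hl' hlt => ih _ (hlt.trans_le hS) hl' rfl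
    by_contra! hlt
    have hgain := sum_gain_le hN hl (hbelow _ le_rfl) hlt
    have hB := hN.isNorm.nonneg (proj B x)
    set M := (l.map size).sum
    have hsize : ∀ t ∈ l, t.size ≤ M := fun t ht =>
      List.le_sum_of_mem (List.mem_map_of_mem ht)
    have hsplit := List.sum_le_sum fun t ht =>
      value_le_pieces_add_gain hN (hl.2 t ht).1 (hsize t ht) (hbelow _ (hsize t ht))
    simp only [List.sum_map_add] at hsplit
    have hswap : (l.map fun t => ∑ s ∈ Finset.range M,
        layerWeight s * t.gain N x (2 ^ (64 * 2 ^ s))).sum =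
        ∑ s ∈ Finset.range M, layerWeight s * (l.map (gain N x (2 ^ (64 * 2 ^ s)))).sum := by
      simpa [List.sum_map_mul_left] using Multiset.sum_map_sum (m := (l : Multiset DoubledTree))
        (s := Finset.range M) (f := fun t s => layerWeight s * t.gain N x (2 ^ (64 * 2 ^ s)))
    have hpieces := sum_pieces_le hN hl x
    have hsmall : (l.map (gain N x (2 ^ 32))).sum ≤ 32 * N (proj B x) := by
      simpa only [Nat.cast_ofNat] using hgain 32
    have hlarge := sum_layerWeight_mul_sum_gain_le hB hgain M
    linarith

end Doubling

end DoubledTree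

/-- The functionals of the inductively defined norming set of the norm, with one additional
operation: a functional `(flog n)⁻¹ • ∑ j, φ j` supported to the right of `i` may be charged to the
coordinate `i`, which means that the `i`-th coordinate functional is added to it, as soon as
`(flog n)⁻¹ ≤ δ i`. The set `E` contains the support. -/
inductive ChargedFunctional (δ : ℕ → ℝ) : Finset ℕ → c00 → Prop
  | zero (E : Finset ℕ) : ChargedFunctional δ E 0
  | single {i : ℕ} {E : Finset ℕ} (hi : i ∈ E) : ChargedFunctional δ E (Finsupp.single i 1)
  | node {n : ℕ} {E : Finset ℕ} {A : Fin n → Finset ℕ} {φ : Fin n → c00} (hn : 2 ≤ n)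
      (hA : IsSuccessive A) (hAE : ∀ j, A j ⊆ E) (hφ : ∀ j, ChargedFunctional δ (A j) (φ j)) :
      ChargedFunctional δ E ((flog n)⁻¹ • ∑ j, φ j)
  | charge {n i : ℕ} {E : Finset ℕ} {A : Fin n → Finset ℕ} {φ : Fin n → c00} (hn : 2 ≤ n)
      (hδ : (flog n)⁻¹ ≤ δ i) (hi : i ∈ E) (hA : IsSuccessive A) (hAE : ∀ j, A j ⊆ E)
      (hiA : ∀ j, ∀ p ∈ A j, i < p) (hφ : ∀ j, ChargedFunctional δ (A j) (φ j)) :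
      ChargedFunctional δ E (Finsupp.single i 1 + (flog n)⁻¹ • ∑ j, φ j)

namespace ChargedFunctional

variable {δ : ℕ → ℝ} {E : Finset ℕ} {φ : c00}

theorem apply_eq_zero (h : ChargedFunctional δ E φ) {p : ℕ} (hp : p ∉ E) : φ p = 0 := by
  induction h with
  | zero E => rfl
  | single hi => exact Finsupp.single_eq_of_ne fun h => hp (h ▸ hi)
  | node _ _ hAE _ ih => simp [fun j => ih j fun h => hp (hAE j h)]
  | @charge n i E A φ _ _ hi _ hAE _ _ ih =>
    have hpi : p ≠ i := fun h => hp (h ▸ hi)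
    rw [Finsupp.add_apply, Finsupp.single_eq_of_ne hpi]
    simp [fun j => ih j fun h => hp (hAE j h)]

theorem apply_nonneg (h : ChargedFunctional δ E φ) (p : ℕ) : 0 ≤ φ p := by
  have hnode : ∀ {n : ℕ} {ψ : Fin n → c00}, (∀ j, 0 ≤ ψ j p) →
      0 ≤ ((flog n)⁻¹ • ∑ j, ψ j) p := fun {n ψ} hψ => by
    simpa using mul_nonneg (inv_nonneg.2 (flog_nonneg n.cast_nonneg))
      (Finset.sum_nonneg fun j _ => hψ j)
  have hsingle : ∀ i : ℕ, 0 ≤ Finsupp.single i (1 : ℝ) p := fun i => by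
    rw [Finsupp.single_apply]
    split_ifs <;> norm_num
  induction h with
  | zero _ => rfl
  | single _ => exact hsingle _
  | node _ _ _ _ ih => exact hnode ih
  | charge _ _ _ _ _ _ _ ih => exact add_nonneg (hsingle _) (hnode ih)

theorem average_apply_le_one {n : ℕ} (hn : 2 ≤ n) {A : Fin n → Finset ℕ} (hA : IsSuccessive A)
    {ψ : Fin n → c00} (hψ : ∀ j, ChargedFunctional δ (A j) (ψ j)) {p : ℕ} (h1 : ∀ j, ψ j p ≤ 1) :
    ((flog n)⁻¹ • ∑ j, ψ j) p ≤ 1 := by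
  have hsum : ∑ j, ψ j p ≤ 1 := by
    by_cases hp : ∃ j, p ∈ A j
    · obtain ⟨j, hj⟩ := hp
      rw [Finset.sum_eq_single j]
      · exact h1 j
      · exact fun i _ hij => (hψ i).apply_eq_zero fun hi => hij (hA.eq_of_mem hi hj)
      · simp
    · push Not at hp
      rw [Finset.sum_eq_zero fun j _ => (hψ j).apply_eq_zero (hp j)]
      exact zero_le_one
  have hf := three_halves_le_flog hn
  rw [Finsupp.smul_apply, Finsupp.finsetSum_apply, smul_eq_mul, inv_mul_le_iff₀ (by linarith)]
  linarith

theorem apply_le_one (h : ChargedFunctional δ E φ) (p : ℕ) : φ p ≤ 1 := by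
  induction h with
  | zero _ => exact zero_le_one
  | single hi =>
    rw [Finsupp.single_apply]
    split_ifs <;> norm_num
  | node hn hA _ hφ ih => exact average_apply_le_one hn hA hφ ih
  | @charge n i E A φ hn hδ hi hA hAE hiA hφ ih =>
    rw [Finsupp.add_apply]
    by_cases hip : p = i
    · subst hip
      simp [fun j => (hφ j).apply_eq_zero fun h => lt_irrefl p (hiA j p h)]
    · rw [Finsupp.single_eq_of_ne hip, zero_add]
      exact average_apply_le_one hn hA hφ ih

theorem restrict (h : ChargedFunctional δ E φ) (F : Finset ℕ) :
    ChargedFunctional δ (E ∩ F) (proj F φ) := by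
  induction h with
  | zero E =>
    rw [proj, Finsupp.filter_zero]
    exact zero _
  | @single i E hi =>
    by_cases hF : i ∈ F
    · rw [proj, Finsupp.filter_single_of_pos _ hF]
      exact single (Finset.mem_inter.2 ⟨hi, hF⟩)
    · rw [proj, Finsupp.filter_single_of_neg _ hF]
      exact zero _
  | node hn hA hAE hφ ih =>
    rw [proj_smul, proj_sum]
    exact node hn (hA.mono fun j => Finset.inter_subset_left)
      (fun j => Finset.inter_subset_inter_right (hAE j)) ih
  | @charge n i E A φ hn hδ hi hA hAE hiA _ ih =>
    have hAF : IsSuccessive fun j => A j ∩ F := hA.mono fun j => Finset.inter_subset_left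
    have hAEF := fun j => Finset.inter_subset_inter_right (u := F) (hAE j)
    rw [proj, Finsupp.filter_add]
    change ChargedFunctional δ (E ∩ F) (_ + proj F _)
    rw [proj_smul, proj_sum]
    by_cases hF : i ∈ F
    · rw [Finsupp.filter_single_of_pos _ hF]
      exact charge hn hδ (Finset.mem_inter.2 ⟨hi, hF⟩) hAF hAEF
        (fun j p hp => hiA j p (Finset.mem_inter.1 hp).1) ih
    · rw [Finsupp.filter_single_of_neg _ hF, zero_add]
      exact node hn hAF hAEF ih

end ChargedFunctional

theorem DoubledTree.inv_flog_mul_sum_le {N : c00 → ℝ} (hN : IsSchlumprechtNorm N) {x : c00}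
    {n : ℕ} {c : Fin n → DoubledTree} (hc : (node n c).IsAdmissible) {B : Finset ℕ}
    (hB : (node n c).support ⊆ B) {d D : ℝ} (hd : (flog n)⁻¹ ≤ d) (hD : 0 ≤ D) {r : Fin n → ℝ}
    (hr : ∀ j, r j ≤ D * (c j).value N x) :
    (flog n)⁻¹ * ∑ j, r j ≤ (1 + 64 * d) * D * N (proj B x) := by
  have hf : 0 < flog n := by linarith [three_halves_le_flog hc.1]
  have hW := hN.isNorm.nonneg (proj B x)
  have hforest : IsForestIn B (List.ofFn c) :=
    ⟨(isForestIn_ofFn hc).1, fun t ht =>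
      ((isForestIn_ofFn hc).2 t ht).imp_right fun h => h.trans hB⟩
  have hdouble := sum_value_le (x := x) hN hforest
  rw [List.map_ofFn, List.sum_ofFn, List.length_ofFn] at hdouble
  calc (flog n)⁻¹ * ∑ j, r j
      ≤ (flog n)⁻¹ * ∑ j, D * (c j).value N x := by gcongr with j; exact hr j
    _ = D * ((flog n)⁻¹ * ∑ j, (c j).value N x) := by rw [← Finset.mul_sum]; ring
    _ ≤ D * ((flog n)⁻¹ * ((flog n + 64) * N (proj B x))) := by gcongr; exact hdouble
    _ = (1 + 64 * (flog n)⁻¹) * D * N (proj B x) := by field_simp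
    _ ≤ (1 + 64 * d) * D * N (proj B x) := by gcongr

namespace ChargedFunctional

variable {N : c00 → ℝ} {δ : ℕ → ℝ} {E : Finset ℕ} {φ : c00}

-- A charge at `i` is paid for by the drop of the factor `D` between `i` and `i + 1`.
theorem exists_doubledTree_le (hN : IsSchlumprechtNorm N) (x : c00) {D : ℕ → ℝ}
    (hD1 : ∀ i, 1 ≤ D i) (hanti : Antitone D) (hD : ∀ i, (1 + 64 * δ i) * D (i + 1) ≤ D i)
    (h : ChargedFunctional δ E φ) {i₀ : ℕ} (hi₀ : ∀ p ∈ E, i₀ ≤ p) :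
    ∃ t : DoubledTree, t.IsAdmissible ∧ t.support ⊆ E ∧
      Finsupp.linearCombination ℝ (fun p => |x p|) φ ≤ D i₀ * t.value N x := by
  have hD0 : ∀ i, 0 ≤ D i := fun i => zero_le_one.trans (hD1 i)
  induction h generalizing i₀ with
  | zero E =>
    exact ⟨.leaf ∅ ∅, by simp [DoubledTree.IsAdmissible, FLt], by simp [DoubledTree.support],
      by simpa using mul_nonneg (hD0 i₀) (DoubledTree.value_nonneg hN.isNorm _)⟩
  | @single i E hi =>
    refine ⟨.leaf {i} ∅, by simp [DoubledTree.IsAdmissible, FLt],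
      by simpa [DoubledTree.support] using hi, ?_⟩
    rw [DoubledTree.value, hN.map_proj_singleton, proj_empty, hN.isNorm.map_zero, add_zero,
      Finsupp.linearCombination_single, one_smul]
    exact le_mul_of_one_le_left (abs_nonneg _) (hD1 i₀)
  | @node n E A φ hn hA hAE _ ih =>
    choose t ht htA hle using fun j => ih j fun p hp => hi₀ p (hAE j hp)
    refine ⟨.node n t, ⟨hn, hA.mono htA, ht⟩,
      Finset.biUnion_subset.2 fun j _ => (htA j).trans (hAE j), ?_⟩
    rw [DoubledTree.value, map_smul, map_sum, smul_eq_mul, mul_left_comm]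
    refine mul_le_mul_of_nonneg_left ?_ (inv_nonneg.2 (flog_nonneg n.cast_nonneg))
    rw [Finset.mul_sum]
    exact Finset.sum_le_sum fun j _ => hle j
  | @charge n i E A φ hn hδ hi hA hAE hiA _ ih =>
    choose t ht htA hle using fun j => ih j (i₀ := i + 1) fun p hp => hiA j p hp
    set B := E.filter (i < ·)
    have hB : (DoubledTree.node n t).support ⊆ B := Finset.biUnion_subset.2 fun j _ p hp =>
      Finset.mem_filter.2 ⟨hAE j (htA j hp), hiA j p (htA j hp)⟩
    have hpay := DoubledTree.inv_flog_mul_sum_le hN ⟨hn, hA.mono htA, ht⟩ hB hδ (hD0 _) hle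
    have hW := hN.isNorm.nonneg (proj B x)
    refine ⟨.leaf {i} B, fun p hp q hq => ?_,
      Finset.union_subset (by simpa using hi) (Finset.filter_subset _ _), ?_⟩
    · rw [Finset.mem_singleton.1 hp]
      exact (Finset.mem_filter.1 hq).2
    rw [DoubledTree.value, hN.map_proj_singleton, map_add, map_smul, map_sum, smul_eq_mul,
      Finsupp.linearCombination_single, one_smul, mul_add]
    refine add_le_add (le_mul_of_one_le_left (abs_nonneg _) (hD1 i₀)) (hpay.trans ?_)
    exact mul_le_mul_of_nonneg_right ((hD i).trans (hanti (hi₀ i hi))) hW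

theorem linearCombination_abs_le (hN : IsSchlumprechtNorm N) (hδ : ∀ i, 0 ≤ δ i)
    (hsum : Summable δ) (h : ChargedFunctional δ E φ) (x : c00) :
    Finsupp.linearCombination ℝ (fun p => |x p|) φ ≤ 2 * Real.exp (64 * ∑' i, δ i) * N x := by
  set D : ℕ → ℝ := fun i => Real.exp (64 * (∑' j, δ j - ∑ j ∈ Finset.range i, δ j)) with hDdef
  have hexp : ∀ i, D i = Real.exp (64 * δ i) * D (i + 1) := fun i => by
    rw [hDdef, ← Real.exp_add, Finset.sum_range_succ]
    ring_nf
  have hD1 : ∀ i, 1 ≤ D i := fun i => Real.one_le_exp (by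
    linarith [hsum.sum_le_tsum (Finset.range i) fun j _ => hδ j])
  have hanti : Antitone D := antitone_nat_of_succ_le fun i => by
    rw [hexp i]
    exact le_mul_of_one_le_left (Real.exp_pos _).le (Real.one_le_exp (by linarith [hδ i]))
  have hD : ∀ i, (1 + 64 * δ i) * D (i + 1) ≤ D i := fun i => by
    rw [hexp i, add_comm]
    exact mul_le_mul_of_nonneg_right (Real.add_one_le_exp _) (Real.exp_pos _).le
  obtain ⟨t, ht, -, hle⟩ := h.exists_doubledTree_le hN x hD1 hanti hD (i₀ := 0)
    fun p _ => p.zero_le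
  have hD0 : D 0 = Real.exp (64 * ∑' i, δ i) := by simp [hDdef]
  calc Finsupp.linearCombination ℝ (fun p => |x p|) φ ≤ D 0 * t.value N x := hle
    _ ≤ D 0 * (2 * N x) := by
      refine mul_le_mul_of_nonneg_left ?_ (zero_le_one.trans (hD1 0))
      linarith [t.value_le_two_mul (x := x) hN ht, hN.proj_le t.support x]
    _ = 2 * Real.exp (64 * ∑' i, δ i) * N x := by rw [hD0]; ring

end ChargedFunctional

section Flanks

/-- `S j` weakly precedes `S j'` for `j < j'`; consecutive sets may share an endpoint. This is how
the sets of vectors of a block sequence meeting successive intervals are ordered. -/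
def IsWeaklySuccessive {ι : Type*} [LT ι] (S : ι → Finset ℕ) : Prop :=
  ∀ j j', j < j' → ∀ i ∈ S j, ∀ i' ∈ S j', i ≤ i'

/-- The number of sides (left, right) on which `i ∈ S` has a further element of `S`; it is `0` for
`i ∉ S`. -/
noncomputable def flankCount (S : Finset ℕ) (i : ℕ) : ℝ :=
  (if i ∈ S ∧ ∃ l ∈ S, l < i then 1 else 0) + if i ∈ S ∧ ∃ r ∈ S, i < r then 1 else 0

theorem flankCount_nonneg (S : Finset ℕ) (i : ℕ) : 0 ≤ flankCount S i := by
  unfold flankCount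
  split_ifs <;> norm_num

theorem flankCount_le_two (S : Finset ℕ) (i : ℕ) : flankCount S i ≤ 2 := by
  unfold flankCount
  split_ifs <;> norm_num

theorem one_le_flankCount {S : Finset ℕ} {i l : ℕ} (hi : i ∈ S) (hl : l ∈ S) (h : l ≠ i) :
    1 ≤ flankCount S i := by
  unfold flankCount
  rcases h.lt_or_gt with h | h
  · rw [if_pos ⟨hi, l, hl, h⟩]
    split_ifs <;> norm_num
  · rw [if_pos (show i ∈ S ∧ ∃ r ∈ S, i < r from ⟨hi, l, hl, h⟩)]
    split_ifs <;> norm_num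

theorem sum_indicator_le {ι : Type*} [Fintype ι] {P : ι → Prop} [DecidablePred P] {Q : Prop}
    [Decidable Q] (hP : ∀ i j, P i → P j → i = j) (hPQ : ∀ i, P i → Q) :
    ∑ i, (if P i then (1 : ℝ) else 0) ≤ if Q then 1 else 0 := by
  by_cases hex : ∃ i, P i
  · obtain ⟨i, hi⟩ := hex
    rw [if_pos (hPQ i hi), Finset.sum_eq_single i fun j _ hj => if_neg fun h => hj (hP j i h hi)]
    · rw [if_pos hi]
    · simp
  · push Not at hex
    rw [Finset.sum_eq_zero fun i _ => if_neg (hex i)]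
    split_ifs <;> norm_num

-- Only the last set containing `i` can contain smaller elements, and only the first larger ones.
theorem IsWeaklySuccessive.sum_flankCount_le {n : ℕ} {S : Fin n → Finset ℕ}
    (hS : IsWeaklySuccessive S) {T : Finset ℕ} (hST : ∀ j, S j ⊆ T) (i : ℕ) :
    ∑ j, flankCount (S j) i ≤ flankCount T i := by
  unfold flankCount
  rw [Finset.sum_add_distrib]
  refine add_le_add (sum_indicator_le ?_ ?_) (sum_indicator_le ?_ ?_)
  · rintro j j' ⟨hj, l, hl, hli⟩ ⟨hj', l', hl', hli'⟩
    rcases lt_trichotomy j j' with h | h | h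
    · exact absurd (hS j j' h i hj l' hl') hli'.not_ge
    · exact h
    · exact absurd (hS j' j h i hj' l hl) hli.not_ge
  · rintro j ⟨hj, l, hl, hli⟩
    exact ⟨hST j hj, l, hST j hl, hli⟩
  · rintro j j' ⟨hj, r, hr, hir⟩ ⟨hj', r', hr', hir'⟩
    rcases lt_trichotomy j j' with h | h | h
    · exact absurd (hS j j' h r hr i hj') hir.not_ge
    · exact h
    · exact absurd (hS j' j h r' hr' i hj) hir'.not_ge
  · rintro j ⟨hj, r, hr, hir⟩
    exact ⟨hST j hj, r, hST j hr, hir⟩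

end Flanks

-- The new functional selects, for each `i > c`, the `φ j` with `i ∈ S j` that is largest at `i`.
theorem ChargedFunctional.exists_combination {δ : ℕ → ℝ} {I : Finset ℕ} {n c : ℕ} (hn : 2 ≤ n)
    (hc : c ∈ I → (flog n)⁻¹ ≤ δ c) {S : Fin n → Finset ℕ} (hS : IsWeaklySuccessive S)
    {φ : Fin n → c00} (hφ : ∀ j, ChargedFunctional δ I (φ j)) :
    ∃ ψ, ChargedFunctional δ I ψ ∧ (c ∈ I → 1 ≤ ψ c) ∧
      ∀ i ∈ I, c < i → ∀ j, i ∈ S j → φ j i ≤ flog n * ψ i := by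
  have hf : 0 < flog n := by linarith [three_halves_le_flog hn]
  have : Nonempty (Fin n) := ⟨⟨0, by omega⟩⟩
  choose J hJ using fun i : ℕ =>
    Finite.exists_max fun j : Fin n => if i ∈ S j then φ j i else 0
  set F : Fin n → Finset ℕ := fun j => I.filter fun i => c < i ∧ J i = j ∧ i ∈ S j
  have hF : IsSuccessive F := fun j j' hjj i hi i' hi' => by
    simp only [F, Finset.mem_filter] at hi hi'
    refine (hS j j' hjj i hi.2.2.2 i' hi'.2.2.2).lt_of_ne ?_
    rintro rfl
    exact hjj.ne (hi.2.2.1.symm.trans hi'.2.2.1)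
  have hIF : IsSuccessive fun j => I ∩ F j := hF.mono fun j => Finset.inter_subset_right
  have hres := fun j => (hφ j).restrict (F j)
  have hle : ∀ i ∈ I, c < i → ∀ j, i ∈ S j →
      φ j i ≤ flog n * ((flog n)⁻¹ • ∑ j, proj (F j) (φ j)) i := fun i hi hci j hij => by
    rw [Finsupp.smul_apply, Finsupp.finsetSum_apply, smul_eq_mul, mul_inv_cancel_left₀ hf.ne']
    have hmax := hJ i j
    rw [if_pos hij] at hmax
    refine (hmax.trans (le_of_eq ?_)).trans (Finset.single_le_sum
      (fun j' _ => (hres j').apply_nonneg i) (Finset.mem_univ (J i)))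
    simp [F, proj_apply, hi, hci]
  by_cases hcI : c ∈ I
  · have hIFc : ∀ j, ∀ p ∈ I ∩ F j, c < p := fun j p hp =>
      (Finset.mem_filter.1 (Finset.mem_inter.1 hp).2).2.1
    refine ⟨_, charge hn (hc hcI) hcI hIF (fun j => Finset.inter_subset_left) hIFc hres,
      fun _ => ?_, fun i hi hci j hij => ?_⟩
    · have := (node (E := I) hn hIF (fun j => Finset.inter_subset_left) hres).apply_nonneg c
      simpa using this
    · rw [Finsupp.add_apply, Finsupp.single_eq_of_ne hci.ne', zero_add]
      exact hle i hi hci j hij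
  · exact ⟨_, node hn hIF (fun j => Finset.inter_subset_left) hres, fun h => absurd h hcI, hle⟩

section RapidlyIncreasing

theorem exists_forall_lt_and_le_sum {n : ℕ} [NeZero n] {t : ℝ} {b : Fin n → ℝ}
    (h : t < ∑ j, b j) : ∃ s : Fin n → ℝ, (∀ j, s j < b j) ∧ t ≤ ∑ j, s j := by
  have hn : (0 : ℝ) < n := by exact_mod_cast NeZero.pos n
  refine ⟨fun j => b j - (∑ j, b j - t) / n, fun j => sub_lt_self _ (by
    have := sub_pos.2 h
    positivity), ?_⟩
  rw [Finset.sum_sub_distrib, Finset.sum_const, Finset.card_univ, Fintype.card_fin, nsmul_eq_mul,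
    mul_div_cancel₀ _ hn.ne']
  linarith

/-- The set of the indices `i ∈ I` for which `y i` does not vanish on `R`. -/
def meeting (I : Finset ℕ) (y : ℕ → c00) (R : Finset ℕ) : Finset ℕ :=
  I.filter fun i => ¬ Disjoint (y i).support R

theorem proj_eq_zero_of_notMem_meeting {I : Finset ℕ} {y : ℕ → c00} {R : Finset ℕ} {i : ℕ}
    (hi : i ∈ I) (h : i ∉ meeting I y R) : proj R (y i) = 0 := by
  rw [meeting, Finset.mem_filter, not_and_not_right] at h
  exact proj_eq_zero fun p hp => Finset.disjoint_left.1 (h hi) hp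

theorem meeting_mono {I : Finset ℕ} {y : ℕ → c00} {R R' : Finset ℕ} (h : R ⊆ R') :
    meeting I y R ⊆ meeting I y R' :=
  Finset.monotone_filter_right _ fun _ _ hi hd => hi (hd.mono_right h)

theorem isWeaklySuccessive_meeting {I : Finset ℕ} {y : ℕ → c00}
    (hy : IsSuccessive fun i : I => (y i).support) {n : ℕ} {R : Fin n → Finset ℕ}
    (hR : IsSuccessive R) : IsWeaklySuccessive fun j => meeting I y (R j) := by
  intro j j' hjj i hi i' hi'
  obtain ⟨hiI, hi⟩ := Finset.mem_filter.1 hi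
  obtain ⟨hi'I, hi'⟩ := Finset.mem_filter.1 hi'
  obtain ⟨p, hp, hpR⟩ := Finset.not_disjoint_iff.1 hi
  obtain ⟨q, hq, hqR⟩ := Finset.not_disjoint_iff.1 hi'
  by_contra! hlt
  exact (hR j j' hjj p hpR q hqR).not_gt (hy ⟨i', hi'I⟩ ⟨i, hiI⟩ hlt q hq p hp)

theorem apply_sum_smul_of_mem_support {I : Finset ℕ} {y : ℕ → c00}
    (hy : IsSuccessive fun i : I => (y i).support) (x : c00) {i : ℕ} (hi : i ∈ I) {p : ℕ}
    (hp : p ∈ (y i).support) : (∑ j ∈ I, x j • y j) p = (x i • y i) p := by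
  rw [Finsupp.finsetSum_apply, Finset.sum_eq_single_of_mem i hi]
  intro j hj hji
  have hpj : p ∉ (y j).support := fun hpj =>
    hji (congrArg Subtype.val (hy.eq_of_mem (i := ⟨j, hj⟩) (j := ⟨i, hi⟩) hpj hp))
  rw [Finsupp.smul_apply, Finsupp.notMem_support_iff.1 hpj, smul_zero]

/-- A finite block sequence `(y i)_{i ∈ I}` in the unit ball is rapidly increasing if for each
`n ≥ 2` there is a critical index `c n` such that `n + 2` successive projections see `y i` as a
single vector for `i > c n`, while `y i` is negligible against `flog n` for `i < c n`. The index
`c n` need not lie in `I`. -/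
structure IsRapidlyIncreasing (N : c00 → ℝ) (I : Finset ℕ) (y : ℕ → c00) (δ : ℕ → ℝ)
    (c : ℕ → ℕ) : Prop where
  nonneg : ∀ i, 0 ≤ δ i
  isSuccessive : IsSuccessive fun i : I => (y i).support
  le_one : ∀ i ∈ I, N (y i) ≤ 1
  sum_proj_le : ∀ n, 2 ≤ n → ∀ i ∈ I, c n < i → ∀ E : Fin (n + 2) → Finset ℕ, IsSuccessive E →
    ∑ j, N (proj (E j) (y i)) ≤ N (y i) + δ i
  inv_flog_le : ∀ n : ℕ, 2 ≤ n → c n ∈ I → (flog n)⁻¹ ≤ δ (c n)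
  sum_abs_le : ∀ n : ℕ, 2 ≤ n → ∀ i ∈ I, i < c n → ∑ p ∈ (y i).support, |y i p| ≤ δ i * flog n

/-- The bound for the contribution of `y i` to the norm on `R` that is associated with a
functional `φ`: the norm of `y i` on `R`, weighted by `φ i`, and an error term for each side on
which `y i` has a neighbour on `R`. -/
noncomputable def coordWeight (N : c00 → ℝ) (I : Finset ℕ) (y : ℕ → c00) (δ : ℕ → ℝ) (φ : c00)
    (R : Finset ℕ) (i : ℕ) : ℝ :=
  φ i * N (proj R (y i)) + 4 * flankCount (meeting I y R) i * δ i

namespace IsRapidlyIncreasing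

variable {N : c00 → ℝ} {I : Finset ℕ} {y : ℕ → c00} {δ : ℕ → ℝ} {c : ℕ → ℕ}

theorem coordWeight_nonneg (h : IsRapidlyIncreasing N I y δ c) (hN : IsNormC00 N) {φ : c00}
    (hφ : ChargedFunctional δ I φ) (R : Finset ℕ) (i : ℕ) : 0 ≤ coordWeight N I y δ φ R i :=
  add_nonneg (mul_nonneg (hφ.apply_nonneg i) (hN.nonneg _))
    (mul_nonneg (mul_nonneg zero_le_four (flankCount_nonneg _ i)) (h.nonneg i))

theorem sum_apply_mul_le (h : IsRapidlyIncreasing N I y δ c) (hN : IsSchlumprechtNorm N) {n : ℕ}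
    (hn : 2 ≤ n) {a b : ℕ} {R : Fin n → Finset ℕ} (hR : IsSuccessive R)
    (hab : ∀ j, R j ⊆ Finset.Ico a b) {φ : Fin n → c00} (hφ : ∀ j, ChargedFunctional δ I (φ j))
    {ψ : c00} (hψ : ChargedFunctional δ I ψ) (hψc : c n ∈ I → 1 ≤ ψ (c n)) {i : ℕ} (hi : i ∈ I)
    (hψi : c n < i → ∀ j, i ∈ meeting I y (R j) → φ j i ≤ flog n * ψ i) :
    ∑ j, φ j i * N (proj (R j) (y i)) ≤
      flog n * (ψ i * N (proj (Finset.Ico a b) (y i)) + δ i) := by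
  have hf := three_halves_le_flog hn
  have hδi := h.nonneg i
  set w := N (proj (Finset.Ico a b) (y i))
  have hw : 0 ≤ w := hN.isNorm.nonneg _
  have hψw : 0 ≤ ψ i * w := mul_nonneg (hψ.apply_nonneg i) hw
  have hone : ∑ j, φ j i * N (proj (R j) (y i)) ≤ ∑ j, N (proj (R j) (y i)) :=
    Finset.sum_le_sum fun j _ => mul_le_of_le_one_left (hN.isNorm.nonneg _) ((hφ j).apply_le_one i)
  rcases lt_trichotomy (c n) i with hci | rfl | hci
  · set M := min 1 (flog n * ψ i)
    have hM : ∀ j, φ j i * N (proj (R j) (y i)) ≤ M * N (proj (R j) (y i)) := fun j => by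
      by_cases hj : i ∈ meeting I y (R j)
      · exact mul_le_mul_of_nonneg_right (le_min ((hφ j).apply_le_one i) (hψi hci j hj))
          (hN.isNorm.nonneg _)
      · rw [proj_eq_zero_of_notMem_meeting hi hj, hN.isNorm.map_zero, mul_zero, mul_zero]
    have hM0 : 0 ≤ M := le_min zero_le_one (mul_nonneg (by linarith) (hψ.apply_nonneg i))
    calc ∑ j, φ j i * N (proj (R j) (y i)) ≤ M * ∑ j, N (proj (R j) (y i)) := by
          rw [Finset.mul_sum]
          exact Finset.sum_le_sum fun j _ => hM j
      _ ≤ M * (w + δ i) := mul_le_mul_of_nonneg_left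
          (hN.sum_proj_le_of_subset_Ico (h.sum_proj_le n hn i hi hci) hR hab) hM0
      _ ≤ flog n * ψ i * w + 1 * δ i := by
          rw [mul_add]
          gcongr
          exacts [min_le_right _ _, min_le_left _ _]
      _ ≤ flog n * (ψ i * w + δ i) := by nlinarith
  · calc _ ≤ flog n * w := hone.trans (hN.sum_proj_le_of_subset hn hR hab _)
      _ ≤ flog n * (ψ (c n) * w + δ (c n)) := by
          gcongr
          linarith [le_mul_of_one_le_left hw (hψc hi)]
  · calc _ ≤ δ i * flog n :=
          hone.trans ((hN.sum_proj_le_sum_abs hR _).trans (h.sum_abs_le n hn i hi hci))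
      _ ≤ flog n * (ψ i * w + δ i) := by nlinarith

theorem exists_sum_coordWeight_le (h : IsRapidlyIncreasing N I y δ c) (hN : IsSchlumprechtNorm N)
    {n : ℕ} (hn : 2 ≤ n) {a b : ℕ} {R : Fin n → Finset ℕ} (hR : IsSuccessive R)
    (hab : ∀ j, R j ⊆ Finset.Ico a b) (hflank : (meeting I y (Finset.Ico a b)).Nontrivial)
    {φ : Fin n → c00} (hφ : ∀ j, ChargedFunctional δ I (φ j)) :
    ∃ ψ, ChargedFunctional δ I ψ ∧ ∀ i ∈ I, ∑ j, coordWeight N I y δ (φ j) (R j) i ≤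
      flog n * coordWeight N I y δ ψ (Finset.Ico a b) i := by
  have hf := three_halves_le_flog hn
  have hS := isWeaklySuccessive_meeting h.isSuccessive hR
  have hmono := fun j => meeting_mono (I := I) (y := y) (hab j)
  obtain ⟨ψ, hψ, hψc, hψi⟩ := ChargedFunctional.exists_combination hn (h.inv_flog_le n hn) hS hφ
  refine ⟨ψ, hψ, fun i hi => ?_⟩
  by_cases him : i ∈ meeting I y (Finset.Ico a b)
  · obtain ⟨l, hl, hli⟩ := hflank.exists_ne i
    have h1 := one_le_flankCount him hl hli
    have hsum := h.sum_apply_mul_le hN hn hR hab hφ hψ hψc hi (hψi i hi)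
    have hcount := mul_le_mul_of_nonneg_right (hS.sum_flankCount_le hmono i) (h.nonneg i)
    simp only [coordWeight, Finset.sum_add_distrib, ← Finset.sum_mul, ← Finset.mul_sum]
    set s := flankCount (meeting I y (Finset.Ico a b)) i
    -- The factor `4` in the weight makes room for the new error since `4 * (flog n - 1) ≥ flog n`.
    have hroom : (flog n + 4 * s) * δ i ≤ flog n * (4 * s) * δ i :=
      mul_le_mul_of_nonneg_right (by nlinarith) (h.nonneg i)
    linarith
  · have hzero : ∀ j, coordWeight N I y δ (φ j) (R j) i = 0 := fun j => by
      have hij : i ∉ meeting I y (R j) := fun hj => him (hmono j hj)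
      simp [coordWeight, flankCount, hij, proj_eq_zero_of_notMem_meeting hi hij,
        hN.isNorm.map_zero]
    rw [Finset.sum_eq_zero fun j _ => hzero j]
    exact mul_nonneg (by linarith) (h.coordWeight_nonneg hN.isNorm hψ _ i)

theorem exists_le_sum_of_le_mul (h : IsRapidlyIncreasing N I y δ c) (hN : IsNormC00 N) (x : c00)
    {R : Finset ℕ} {i : ℕ} (hi : i ∈ I) {t : ℝ} (ht : t ≤ |x i| * N (proj R (y i))) :
    ∃ φ, ChargedFunctional δ I φ ∧ t ≤ ∑ i ∈ I, |x i| * coordWeight N I y δ φ R i := by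
  refine ⟨_, .single hi, ht.trans (le_trans (mul_le_mul_of_nonneg_left ?_ (abs_nonneg _))
    (Finset.single_le_sum (fun j _ => mul_nonneg (abs_nonneg (x j))
      (h.coordWeight_nonneg hN (.single hi) R j)) hi))⟩
  rw [coordWeight, Finsupp.single_eq_same, one_mul]
  exact le_add_of_nonneg_right
    (mul_nonneg (mul_nonneg zero_le_four (flankCount_nonneg _ i)) (h.nonneg i))

theorem exists_le_sum_of_not_nontrivial (h : IsRapidlyIncreasing N I y δ c) (hN : IsNormC00 N)
    (x : c00) {R : Finset ℕ} (hR : ¬ (meeting I y R).Nontrivial) :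
    ∃ φ, ChargedFunctional δ I φ ∧ N (proj R (∑ i ∈ I, x i • y i)) ≤
      ∑ i ∈ I, |x i| * coordWeight N I y δ φ R i := by
  have hproj : proj R (∑ i ∈ I, x i • y i) = ∑ i ∈ I, x i • proj R (y i) := by
    simp only [proj_sum, proj_smul]
  rcases (meeting I y R).eq_empty_or_nonempty with hempty | ⟨i, hi⟩
  · refine ⟨0, .zero I, ?_⟩
    rw [hproj, Finset.sum_eq_zero fun i hi => by
      rw [proj_eq_zero_of_notMem_meeting hi (by simp [hempty]), smul_zero], hN.map_zero]
    exact Finset.sum_nonneg fun i _ =>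
      mul_nonneg (abs_nonneg _) (h.coordWeight_nonneg hN (.zero I) R i)
  · have hiI := (Finset.mem_filter.1 hi).1
    refine h.exists_le_sum_of_le_mul hN x hiI ?_
    rw [hproj, Finset.sum_eq_single_of_mem i hiI, hN.map_smul]
    intro j hj hji
    rw [proj_eq_zero_of_notMem_meeting hj fun hjm => hR ⟨j, hjm, i, hi, hji⟩, smul_zero]

theorem exists_le_sum_of_le_abs_apply (h : IsRapidlyIncreasing N I y δ c)
    (hN : IsSchlumprechtNorm N) (x : c00) {R : Finset ℕ} {t : ℝ} (ht0 : 0 ≤ t) {p : ℕ}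
    (ht : t < |proj R (∑ i ∈ I, x i • y i) p|) :
    ∃ φ, ChargedFunctional δ I φ ∧ t ≤ ∑ i ∈ I, |x i| * coordWeight N I y δ φ R i := by
  have hne : proj R (∑ i ∈ I, x i • y i) p ≠ 0 := abs_pos.1 (ht0.trans_lt ht)
  have hpR : p ∈ R := by
    by_contra hpR
    exact hne (by rw [proj_apply, if_neg hpR])
  rw [proj_apply, if_pos hpR] at ht hne
  obtain ⟨i, hi, hip⟩ : ∃ i ∈ I, p ∈ (y i).support := by
    rw [Finsupp.finsetSum_apply] at hne
    obtain ⟨i, hi, hip⟩ := Finset.exists_ne_zero_of_sum_ne_zero hne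
    exact ⟨i, hi, Finsupp.mem_support_iff.2 (right_ne_zero_of_mul hip)⟩
  refine h.exists_le_sum_of_le_mul hN.isNorm x hi (ht.le.trans ?_)
  rw [apply_sum_smul_of_mem_support h.isSuccessive x hi hip, Finsupp.smul_apply, smul_eq_mul,
    abs_mul]
  refine mul_le_mul_of_nonneg_left ?_ (abs_nonneg _)
  simpa [proj_apply, hpR] using hN.abs_apply_le (proj R (y i)) p

theorem exists_le_sum_of_split (h : IsRapidlyIncreasing N I y δ c) (hN : IsSchlumprechtNorm N)
    (x : c00) {n : ℕ} (hn : 2 ≤ n) {a b : ℕ} {R : Fin n → Finset ℕ} (hR : IsSuccessive R)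
    (hab : ∀ j, R j ⊆ Finset.Ico a b) (hflank : (meeting I y (Finset.Ico a b)).Nontrivial)
    {t : ℝ} {s : Fin n → ℝ} (hts : t * flog n ≤ ∑ j, s j)
    (hs : ∀ j, ∃ φ, ChargedFunctional δ I φ ∧
      s j ≤ ∑ i ∈ I, |x i| * coordWeight N I y δ φ (R j) i) :
    ∃ φ, ChargedFunctional δ I φ ∧
      t ≤ ∑ i ∈ I, |x i| * coordWeight N I y δ φ (Finset.Ico a b) i := by
  choose φ hφ hsφ using hs
  obtain ⟨ψ, hψ, hle⟩ := h.exists_sum_coordWeight_le hN hn hR hab hflank hφ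
  refine ⟨ψ, hψ, le_of_mul_le_mul_right ?_
    (show 0 < flog n by linarith [three_halves_le_flog hn])⟩
  calc t * flog n ≤ ∑ j, ∑ i ∈ I, |x i| * coordWeight N I y δ (φ j) (R j) i :=
        hts.trans (Finset.sum_le_sum fun j _ => hsφ j)
    _ = ∑ i ∈ I, |x i| * ∑ j, coordWeight N I y δ (φ j) (R j) i := by
        simp only [Finset.sum_comm (s := Finset.univ), Finset.mul_sum]
    _ ≤ ∑ i ∈ I, |x i| * (flog n * coordWeight N I y δ ψ (Finset.Ico a b) i) :=
        Finset.sum_le_sum fun i hi => mul_le_mul_of_nonneg_left (hle i hi) (abs_nonneg _)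
    _ = (∑ i ∈ I, |x i| * coordWeight N I y δ ψ (Finset.Ico a b) i) * flog n := by
        rw [Finset.sum_mul]
        exact Finset.sum_congr rfl fun i _ => by ring

theorem exists_le_sum_coordWeight (h : IsRapidlyIncreasing N I y δ c) (hN : IsSchlumprechtNorm N)
    (x : c00) (a b : ℕ) {t : ℝ} (ht : t < N (proj (Finset.Ico a b) (∑ i ∈ I, x i • y i))) :
    ∃ φ, ChargedFunctional δ I φ ∧
      t ≤ ∑ i ∈ I, |x i| * coordWeight N I y δ φ (Finset.Ico a b) i := by
  induction hm : (proj (Finset.Ico a b) (∑ i ∈ I, x i • y i)).support.card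
    using Nat.strong_induction_on generalizing a b t with
  | _ m ih =>
    subst hm
    rcases lt_or_ge t 0 with ht0 | ht0
    · exact ⟨0, .zero I, ht0.le.trans (Finset.sum_nonneg fun i _ =>
        mul_nonneg (abs_nonneg _) (h.coordWeight_nonneg hN.isNorm (.zero I) _ i))⟩
    by_cases hflank : (meeting I y (Finset.Ico a b)).Nontrivial
    swap
    · obtain ⟨φ, hφ, hle⟩ := h.exists_le_sum_of_not_nontrivial hN.isNorm x hflank
      exact ⟨φ, hφ, ht.le.trans hle⟩
    rcases hN.exists_Ico_split_of_lt ht0 ht with ⟨p, hp⟩ | ⟨n, hn, a', b', hIco, hcard, hsum⟩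
    · exact h.exists_le_sum_of_le_abs_apply hN x ht0 hp
    simp only [proj_proj, Finset.Ico_inter_Ico] at hcard hsum
    have : NeZero n := ⟨by omega⟩
    obtain ⟨s, hs, hts⟩ := exists_forall_lt_and_le_sum hsum
    exact h.exists_le_sum_of_split hN x hn
      (hIco.mono fun j => Finset.Ico_subset_Ico (le_max_left _ _) (min_le_left _ _))
      (fun j => Finset.Ico_subset_Ico (le_max_right _ _) (min_le_right _ _)) hflank hts
      fun j => ih _ (hcard j) _ _ (hs j) rfl

theorem sum_mul_coordWeight_le (h : IsRapidlyIncreasing N I y δ c) (hN : IsSchlumprechtNorm N)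
    (hsum : Summable δ) (x : c00) {φ : c00} (hφ : ChargedFunctional δ I φ) (R : Finset ℕ) :
    ∑ i ∈ I, |x i| * coordWeight N I y δ φ R i ≤
      (2 * Real.exp (64 * ∑' i, δ i) + 8 * ∑' i, δ i) * N x := by
  have hlin : Finsupp.linearCombination ℝ (fun p => |x p|) φ = ∑ i ∈ I, φ i * |x i| := by
    rw [Finsupp.linearCombination_apply, Finsupp.sum_of_support_subset (s := I)]
    · rfl
    · intro p hp
      by_contra hpI
      exact Finsupp.mem_support_iff.1 hp (hφ.apply_eq_zero hpI)
    · simp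
  have hterm : ∀ i ∈ I, |x i| * coordWeight N I y δ φ R i ≤ φ i * |x i| + 8 * N x * δ i :=
    fun i hi => by
    have hδ := h.nonneg i
    have hφi : φ i * N (proj R (y i)) ≤ φ i * 1 :=
      mul_le_mul_of_nonneg_left ((hN.proj_le R _).trans (h.le_one i hi)) (hφ.apply_nonneg i)
    have hflank : 4 * flankCount (meeting I y R) i * δ i ≤ 8 * δ i := by
      gcongr
      linarith [flankCount_le_two (meeting I y R) i]
    calc |x i| * coordWeight N I y δ φ R i ≤ |x i| * (φ i * 1 + 8 * δ i) :=
          mul_le_mul_of_nonneg_left (add_le_add hφi hflank) (abs_nonneg _)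
      _ = φ i * |x i| + 8 * |x i| * δ i := by ring
      _ ≤ φ i * |x i| + 8 * N x * δ i := by
          gcongr
          exact hN.abs_apply_le x i
  have hx := hN.isNorm.nonneg x
  calc ∑ i ∈ I, |x i| * coordWeight N I y δ φ R i
      ≤ ∑ i ∈ I, φ i * |x i| + 8 * N x * ∑ i ∈ I, δ i := by
        rw [Finset.mul_sum, ← Finset.sum_add_distrib]
        exact Finset.sum_le_sum hterm
    _ ≤ 2 * Real.exp (64 * ∑' i, δ i) * N x + 8 * N x * ∑' i, δ i := by
        refine add_le_add (hlin ▸ hφ.linearCombination_abs_le hN h.nonneg hsum x) ?_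
        gcongr
        exact hsum.sum_le_tsum I fun i _ => h.nonneg i
    _ = _ := by ring

theorem map_sum_smul_le (h : IsRapidlyIncreasing N I y δ c) (hN : IsSchlumprechtNorm N)
    (hsum : Summable δ) (x : c00) :
    N (∑ i ∈ I, x i • y i) ≤ (2 * Real.exp (64 * ∑' i, δ i) + 8 * ∑' i, δ i) * N x := by
  obtain ⟨a, b, hab, -⟩ := exists_Ico_hull (∑ i ∈ I, x i • y i).support
  refine le_of_forall_lt_imp_le_of_dense fun t ht => ?_
  rw [← proj_eq_self hab] at ht
  obtain ⟨φ, hφ, hle⟩ := h.exists_le_sum_coordWeight hN x a b ht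
  exact hle.trans (h.sum_mul_coordWeight_le hN hsum x hφ _)

end IsRapidlyIncreasing

theorem IsSchlumprechtNorm.map_le_map_sum_smul {N : c00 → ℝ} (hN : IsSchlumprechtNorm N)
    {I : Finset ℕ} {y : ℕ → c00} (hy : IsSuccessive fun i : I => (y i).support)
    (h1 : ∀ i ∈ I, 1 ≤ N (y i)) {x : c00} (hx : x.support ⊆ I) :
    N x ≤ N (∑ i ∈ I, x i • y i) := by
  have hG : IsSuccessive fun i => if i ∈ I then (y i).support else ∅ := fun i j hij p hp q hq => by
    beta_reduce at hp hq
    split_ifs at hp hq with hi hj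
    · exact hy ⟨i, hi⟩ ⟨j, hj⟩ hij p hp q hq
    all_goals simp at hp hq
  refine hN.le_of_abs_le_proj hG fun i => ?_
  by_cases hi : i ∈ I
  · have hproj : proj (y i).support (∑ j ∈ I, x j • y j) = x i • y i := by
      ext p
      rw [proj_apply]
      split_ifs with hp
      · exact apply_sum_smul_of_mem_support hy x hi hp
      · simp [Finsupp.notMem_support_iff.1 hp]
    rw [if_pos hi, hproj, hN.isNorm.map_smul]
    exact le_mul_of_one_le_right (abs_nonneg _) (h1 i hi)
  · rw [Finsupp.notMem_support_iff.1 fun h => hi (hx h), abs_zero]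
    exact hN.isNorm.nonneg _

end RapidlyIncreasing

section ErrorSequence

theorem isSuccessive_support_of_consecutive {y : ℕ → c00} (hne : ∀ n, 1 ≤ n → y n ≠ 0)
    (hblock : ∀ n, 1 ≤ n → FLt (y n).support (y (n + 1)).support) {I : Set ℕ}
    (hI : ∀ i ∈ I, 1 ≤ i) : IsSuccessive fun i : I => (y i).support := by
  suffices h : ∀ i, 1 ≤ i → ∀ j, i < j → FLt (y i).support (y j).support from
    fun i j hij => h i (hI i i.2) j hij
  intro i hi j hij
  induction j, hij using Nat.le_induction with
  | base => exact hblock i hi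
  | succ j hij ih =>
    intro p hp q hq
    have hj : 1 ≤ j := hi.trans (Nat.le_of_succ_le hij)
    obtain ⟨r, hr⟩ := Finsupp.support_nonempty_iff.2 (hne j hj)
    exact (ih p hp r hr).trans (hblock j hj r hr q hq)

theorem one_le_of_mem_support_of_two_le {y : ℕ → c00} (hne : ∀ n, 1 ≤ n → y n ≠ 0)
    (hblock : ∀ n, 1 ≤ n → FLt (y n).support (y (n + 1)).support) :
    ∀ n, 2 ≤ n → ∀ p ∈ (y n).support, 1 ≤ p := by
  intro n hn p hp
  obtain ⟨q, hq⟩ := Finsupp.support_nonempty_iff.2 (hne 1 le_rfl)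
  have hqp := isSuccessive_support_of_consecutive hne hblock (I := Set.Ici 1) (fun i hi => hi)
    ⟨1, Set.mem_Ici.2 le_rfl⟩ ⟨n, Set.mem_Ici.2 (by omega)⟩ hn q hq p hp
  omega

theorem exists_criticalIndex {k : ℕ → ℕ} (hk : StrictMono k) : ∃ c : ℕ → ℕ,
    ∀ n, (∀ i, c n < i → n + 2 ≤ k (i - 1)) ∧ (1 ≤ c n → k (c n - 1) ≤ n + 1) := by
  refine ⟨fun n => Nat.findGreatest (fun i => k (i - 1) ≤ n + 1) (n + 2), fun n =>
    ⟨fun i hi => ?_, fun h => Nat.findGreatest_of_ne_zero (P := fun i => k (i - 1) ≤ n + 1) rfl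
      (Nat.one_le_iff_ne_zero.1 h)⟩⟩
  rcases le_or_gt i (n + 2) with hin | hin
  · exact not_le.1 (Nat.findGreatest_is_greatest (P := fun i => k (i - 1) ≤ n + 1) hi hin)
  · exact (Nat.le_sub_one_of_lt hin).trans (hk.le_apply)

theorem cast_le_abs_mul_flog {l n p : ℕ} {e : ℝ} (hl : l ≤ n + 1) (hn : 2 ≤ n)
    (hp : (p : ℝ) ≤ e * flog ((l : ℝ) / 3)) : (p : ℝ) ≤ |e| * flog n := by
  have hl3 : (l : ℝ) / 3 ≤ n := by
    have hl' : (l : ℝ) ≤ n + 1 := by exact_mod_cast hl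
    have hn' : (2 : ℝ) ≤ n := by exact_mod_cast hn
    linarith
  have hl0 : (0 : ℝ) ≤ (l : ℝ) / 3 := by positivity
  exact hp.trans (mul_le_mul (le_abs_self e) (flog_mono hl0 hl3) (flog_nonneg hl0) (abs_nonneg e))

theorem IsSchlumprechtNorm.sum_abs_le_of_support_le {N : c00 → ℝ} (hN : IsSchlumprechtNorm N)
    {z : c00} (hz : N z ≤ 1) (hz0 : z ≠ 0) (hpos : ∀ p ∈ z.support, 1 ≤ p) {M : ℝ}
    (hM : ∀ p ∈ z.support, (p : ℝ) ≤ M) : ∑ p ∈ z.support, |z p| ≤ M := by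
  have hne := Finsupp.support_nonempty_iff.2 hz0
  have hcard : z.support.card ≤ z.support.max' hne := by
    simpa using Finset.card_le_card fun p hp =>
      Finset.mem_Icc.2 ⟨hpos p hp, z.support.le_max' p hp⟩
  calc ∑ p ∈ z.support, |z p| ≤ ∑ _p ∈ z.support, (1 : ℝ) :=
        Finset.sum_le_sum fun p _ => (hN.abs_apply_le z p).trans hz
    _ = (z.support.card : ℝ) := by simp
    _ ≤ (z.support.max' hne : ℝ) := by exact_mod_cast hcard
    _ ≤ M := hM _ (z.support.max'_mem hne)

/-- The errors of the block sequence `y` as a rapidly increasing sequence: below the critical index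
and above it `ε i` is the error, at the critical index it is `ε (i - 1)`. The last summand covers
the indices at which no lower bound for the support is available, with a bound `A` for the
`ℓ₁`-norm of `y 1`. -/
noncomputable def blockError (ε : ℕ → ℝ) (A : ℝ) (i : ℕ) : ℝ :=
  |ε i| + |ε (i - 1)| + if i ≤ 2 then 1 + |A| else 0

theorem abs_le_blockError (ε : ℕ → ℝ) (A : ℝ) (i : ℕ) : |ε i| ≤ blockError ε A i := by
  rw [blockError, add_assoc]
  refine le_add_of_nonneg_right (add_nonneg (abs_nonneg _) ?_)
  split_ifs <;> positivity

theorem abs_pred_le_blockError (ε : ℕ → ℝ) (A : ℝ) (i : ℕ) :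
    |ε (i - 1)| ≤ blockError ε A i := by
  rw [blockError, add_right_comm]
  refine le_add_of_nonneg_left (add_nonneg (abs_nonneg _) ?_)
  split_ifs <;> positivity

theorem one_add_abs_le_blockError (ε : ℕ → ℝ) (A : ℝ) {i : ℕ} (hi : i ≤ 2) :
    1 + |A| ≤ blockError ε A i := by
  rw [blockError, if_pos hi]
  exact le_add_of_nonneg_left (by positivity)

theorem summable_blockError {ε : ℕ → ℝ} (hε : Summable ε) (A : ℝ) : Summable (blockError ε A) := by
  refine (hε.abs.add ((summable_nat_add_iff 1).1 (by simpa using hε.abs))).add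
    (summable_of_ne_finset_zero (s := Finset.range 3) fun i hi => if_neg ?_)
  rw [Finset.mem_range] at hi
  omega

theorem exists_isRapidlyIncreasing {N : c00 → ℝ} (hN : IsSchlumprechtNorm N) {ε : ℕ → ℝ}
    (hε : Summable ε) {y : ℕ → c00} (hnorm : ∀ n, 1 ≤ n → N (y n) = 1)
    (hblock : ∀ n, 1 ≤ n → FLt (y n).support (y (n + 1)).support) {k : ℕ → ℕ} (hk : StrictMono k)
    (h1 : ∀ n, 1 ≤ n → ∀ m : ℕ, 1 ≤ m → m ≤ k (n - 1) → ∀ E : Fin m → Finset ℕ,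
      IsSuccessive E → ∑ i, N (proj (E i) (y n)) ≤ 1 + ε n)
    (h2 : ∀ n, 1 ≤ n → ∀ i ∈ (y n).support, (i : ℝ) ≤ ε n * flog ((k n : ℝ) / 3)) :
    ∃ δ c, Summable δ ∧ ∀ m, IsRapidlyIncreasing N (Finset.Icc 1 m) y δ c := by
  have hne : ∀ n, 1 ≤ n → y n ≠ 0 := by
    intro n hn h0
    simpa [h0, hN.isNorm.map_zero] using hnorm n hn
  have hpos := one_le_of_mem_support_of_two_le hne hblock
  obtain ⟨c, hc⟩ := exists_criticalIndex hk
  set A := ∑ p ∈ (y 1).support, |y 1 p|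
  refine ⟨blockError ε A, c, summable_blockError hε A, fun m =>
    ⟨fun i => (abs_nonneg _).trans (abs_le_blockError ε A i),
      isSuccessive_support_of_consecutive hne hblock fun i hi => (Finset.mem_Icc.1 hi).1,
      fun i hi => (hnorm i (Finset.mem_Icc.1 hi).1).le, fun n hn i hi hci E hE => ?_,
      fun n hn _ => ?_, fun n hn i hi hic => ?_⟩⟩
  · have hi1 := (Finset.mem_Icc.1 hi).1
    rw [hnorm i hi1]
    exact (h1 i hi1 (n + 2) (by omega) ((hc n).1 i hci) E hE).trans
      (add_le_add_right ((le_abs_self _).trans (abs_le_blockError ε A i)) 1)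
  · have hf := three_halves_le_flog hn
    rcases le_or_gt (c n) 2 with hc2 | hc2
    · exact (inv_le_one_of_one_le₀ (by linarith)).trans
        (by linarith [one_add_abs_le_blockError ε A hc2, abs_nonneg A])
    · obtain ⟨p, hp⟩ := Finsupp.support_nonempty_iff.2 (hne (c n - 1) (by omega))
      have hp1 : (1 : ℝ) ≤ p := by exact_mod_cast hpos _ (by omega) p hp
      have hple := cast_le_abs_mul_flog ((hc n).2 (by omega)) hn (h2 _ (by omega) p hp)
      refine le_trans ?_ (abs_pred_le_blockError ε A (c n))
      rw [inv_le_iff_one_le_mul₀ (by linarith)]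
      exact hp1.trans hple
  · have hi1 := (Finset.mem_Icc.1 hi).1
    have hki : k i ≤ n + 1 := (hk.monotone (Nat.le_sub_one_of_lt hic)).trans ((hc n).2 (by omega))
    have hf := three_halves_le_flog hn
    rcases hi1.eq_or_lt with rfl | hi2
    · have hA := one_add_abs_le_blockError ε A (i := 1) (by omega)
      nlinarith [le_abs_self A, abs_nonneg A]
    · refine (hN.sum_abs_le_of_support_le (hnorm i hi1).le (hne i hi1) (hpos i hi2) fun p hp =>
        cast_le_abs_mul_flog hki hn (h2 i hi1 p hp)).trans ?_
      exact mul_le_mul_of_nonneg_right (abs_le_blockError ε A i) (by linarith)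

end ErrorSequence

/-- Theorem 2.4: under conditions (1) and (2) (for all n ≥ 1, with
`(k_n)_{n≥0}` strictly increasing), the sequence `(y_n)_{n≥1}` is equivalent to
the unit vector basis `(e_n)`. -/
theorem block_sequence_equivalent_to_basis
    (N : c00 → ℝ) (hN : IsSchlumprechtNorm N)
    (ε : ℕ → ℝ) (hεpos : ∀ n, 1 ≤ n → 0 < ε n)
    (hεsum : Summable fun n => ε (n + 1))
    (y : ℕ → c00) (hnorm : ∀ n, 1 ≤ n → N (y n) = 1)
    (hblock : ∀ n, 1 ≤ n → ∀ i ∈ (y n).support, ∀ j ∈ (y (n + 1)).support, i < j)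
    (k : ℕ → ℕ) (hk : StrictMono k)
    (h1 : ∀ n, 1 ≤ n → ∀ m : ℕ, 1 ≤ m → m ≤ k (n - 1) →
      ∀ E : Fin m → Finset ℕ, (∀ i j : Fin m, i < j → FLt (E i) (E j)) →
        ∑ i, N (proj (E i) (y n)) ≤ 1 + ε n)
    (h2 : ∀ n, 1 ≤ n → ∀ i ∈ (y n).support, (i : ℝ) ≤ ε n * flog ((k n : ℝ) / 3)) :
    ∃ C : ℝ, 1 ≤ C ∧ ∀ m : ℕ, ∀ α : ℕ → ℝ,
      (1 / C) * N (∑ i ∈ Finset.Icc 1 m, α i • Finsupp.single i (1 : ℝ)) ≤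
        N (∑ i ∈ Finset.Icc 1 m, α i • y i) ∧
      N (∑ i ∈ Finset.Icc 1 m, α i • y i) ≤
        C * N (∑ i ∈ Finset.Icc 1 m, α i • Finsupp.single i (1 : ℝ)) := by
  have hε : Summable ε := (summable_nat_add_iff 1).1 hεsum
  obtain ⟨δ, c, hδ, hy⟩ := exists_isRapidlyIncreasing hN hε hnorm hblock hk h1 h2
  have hT : 0 ≤ ∑' i, δ i := tsum_nonneg (hy 0).nonneg
  have hC : 1 ≤ 2 * Real.exp (64 * ∑' i, δ i) + 8 * ∑' i, δ i := by
    linarith [Real.one_le_exp (show 0 ≤ 64 * ∑' i, δ i by linarith)]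
  refine ⟨_, hC, fun m α => ?_⟩
  set x : c00 := ∑ i ∈ Finset.Icc 1 m, α i • Finsupp.single i (1 : ℝ) with hx
  have hxα : ∀ i, x i = if i ∈ Finset.Icc 1 m then α i else 0 := fun i => by
    simp [hx, Finsupp.finsetSum_apply, Finsupp.single_apply]
  have hxs : x.support ⊆ Finset.Icc 1 m := fun i hi => by
    by_contra hiI
    exact Finsupp.mem_support_iff.1 hi (by rw [hxα, if_neg hiI])
  have hsum : ∑ i ∈ Finset.Icc 1 m, α i • y i = ∑ i ∈ Finset.Icc 1 m, x i • y i :=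
    Finset.sum_congr rfl fun i hi => by rw [hxα, if_pos hi]
  rw [hsum, one_div, inv_mul_le_iff₀ (zero_lt_one.trans_le hC)]
  refine ⟨?_, (hy m).map_sum_smul_le hN hδ x⟩
  exact (hN.map_le_map_sum_smul (hy m).isSuccessive
    (fun i hi => (hnorm i (Finset.mem_Icc.1 hi).1).ge) hxs).trans
    (le_mul_of_one_le_left (hN.isNorm.nonneg _) hC)
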